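/- Let I and J be sentences with J ⊆_L I, and let K be a sentence with |K| = |I| − |J|. Then the coefficient ⟨𝔖_J·H_K, 𝔖*_I⟩ equals the number of skew colored immaculate tableaux of shape I/J and type K. -/

import Mathlib

open scoped BigOperators

namespace ColoredImm

variable {A : Type*}

/-- A *weak sentence* over the alphabet `A`: a finite list of words (words may be empty). -/
abbrev Sentence (A : Type*) := List (List A)

/-- A genuine *sentence*: all of its words are nonempty. -/
def IsSentence (I : Sentence A) : Prop := ∀ w ∈ I, w ≠ []

/-- The size `|I|` of a sentence: its total number of letters. -/
def size (I : Sentence A) : ℕ := (I.map List.length).sum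

/-- The word lengths `wℓ(I)` of a sentence. -/
def wl (I : Sentence A) : List ℕ := I.map List.length

/-- The flattening of a weak sentence: delete all empty words. -/
def flattenWS (I : Sentence A) : Sentence A := I.filter (fun w => !w.isEmpty)

/-- `Refines J I` means `J ⪯ I`: the sentence `I` can be obtained by concatenating
some adjacent words of `J` (so `J` is a refinement of `I`, and `I` a coarsening of `J`). -/
def Refines (J I : Sentence A) : Prop :=
  ∃ P : List (Sentence A), (∀ p ∈ P, p ≠ []) ∧ P.flatten = J ∧ P.map List.flatten = I

/-! ### Fillings and colored immaculate tableaux -/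

/-- An integer filling of a diagram, recorded row by row. -/
abbrev Filling := List (List ℕ)

/-- The entry of a filling at box `b = (row, column)` (0-indexed), with default `0`. -/
def entryAt (f : Filling) (b : ℕ × ℕ) : ℕ := (f.getD b.1 []).getD b.2 0

/-- `IsCIT I f`: `f` is a colored immaculate tableau of shape `I`; that is, `f` has the
same shape as the colored composition diagram of `I`, its entries are positive integers
weakly increasing left to right along each row, and the entries in the first column are
strictly increasing from top to bottom. -/
def IsCIT (I : Sentence A) (f : Filling) : Prop :=
  f.map List.length = I.map List.length ∧
  (∀ row ∈ f, row.Chain' (· ≤ ·)) ∧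
  (f.filterMap List.head?).Chain' (· < ·) ∧
  (∀ x ∈ f.flatten, 1 ≤ x)

/-- The colors (letters of `w`) of the boxes of one row whose entry (in `row`) is `v`,
read from left to right. -/
def rowWith (w : List A) (row : List ℕ) (v : ℕ) : List A :=
  ((w.zip row).filter (fun p => p.2 == v)).map Prod.fst

/-- The word of the type of a tableau at value `v`: the colors of all boxes with entry `v`,
read left to right, from the bottom row up to the top row. -/
def typeWord (I : Sentence A) (f : Filling) (v : ℕ) : List A :=
  (((I.zip f).reverse).map (fun p => rowWith p.1 p.2 v)).flatten

/-- `HasType I f B` : the tableau `f` (of shape `I`) has type the weak sentence `B`,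
i.e. for every positive integer `v`, the colors of the boxes of `f` containing `v`
(read left to right, bottom to top) form the `v`-th word of `B`. -/
def HasType (I : Sentence A) (f : Filling) (B : Sentence A) : Prop :=
  ∀ v, 1 ≤ v → typeWord I f v = B.getD (v - 1) []

/-- `K_{J,B}`: the number of colored immaculate tableaux of shape `J` and type `B`. -/
noncomputable def KJB (J B : Sentence A) : ℕ :=
  Set.ncard {f : Filling | IsCIT J f ∧ HasType J f B}

/-! ### Standardization -/

/-- The list of boxes of a filling. -/
def boxes (f : Filling) : List (ℕ × ℕ) :=
  ((List.range f.length).map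
    (fun r => (List.range (f.getD r []).length).map (fun j => (r, j)))).flatten

/-- `beforeB f b b'`: box `b` comes strictly before box `b'` in the type-reading order of `f`
(smaller entries first; among equal entries, lower rows first, and within a row left to right). -/
def beforeB (f : Filling) (b b' : ℕ × ℕ) : Bool :=
  entryAt f b < entryAt f b' ||
    (entryAt f b == entryAt f b' && (b'.1 < b.1 || (b.1 == b'.1 && b.2 < b'.2)))

/-- The standardization of a filling: each box is renumbered (starting from `1`)
according to its position in the type-reading order. -/
def stdFill (f : Filling) : Filling :=
  (List.range f.length).map (fun r =>
    (List.range (f.getD r []).length).map (fun j =>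
      1 + ((boxes f).filter (fun b' => beforeB f b' (r, j))).length))

/-- The number of boxes of a filling. -/
def nBoxes (f : Filling) : ℕ := f.flatten.length

/-- A filling of `n` boxes is standard when its entries are exactly `1, …, n`,
each appearing once. -/
def IsStandardF (f : Filling) : Prop := f.flatten.Perm (List.range' 1 (nBoxes f))

/-! ### Descents and the colored descent composition -/

/-- The (0-indexed) row containing the value `v` in a standard filling. -/
def rowOf (f : Filling) (v : ℕ) : ℕ := f.findIdx (fun row => row.contains v)

/-- The sorted list of descents of a standard filling: those `i` with `1 ≤ i ≤ n-1`
such that `i+1` lies in a strictly lower row than `i`. -/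
def descList (f : Filling) : List ℕ :=
  (List.range' 1 (nBoxes f - 1)).filter (fun i => decide (rowOf f i < rowOf f (i + 1)))

/-- The composition of `n` associated to a set of split positions `d_1 < … < d_k`:
`(d_1, d_2 - d_1, …, n - d_k)`. -/
def compOf (ds : List ℕ) (n : ℕ) : List ℕ :=
  List.zipWith (fun a b => b - a) (0 :: ds) (ds ++ [n])

/-- Split a word into a sentence according to a composition. -/
def splitByComp : List A → List ℕ → List (List A)
  | _, [] => []
  | w, a :: rest => w.take a :: splitByComp (w.drop a) rest

/-- The color of the box containing the value `v` in a standard filling of shape `I`. -/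
def colorOf [Inhabited A] (I : Sentence A) (f : Filling) (v : ℕ) : A :=
  (I.getD (rowOf f v) []).getD ((f.getD (rowOf f v) []).findIdx (fun x => x == v)) default

/-- The maximal word of the colored descent composition of a standard filling of shape `I`:
the colors of its boxes read in the order of their integer entries. -/
def readWord [Inhabited A] (I : Sentence A) (f : Filling) : List A :=
  (List.range (nBoxes f)).map (fun i => colorOf I f (i + 1))

/-- The colored descent composition `co_A(U)` of a standard colored immaculate tableau:
read the colors of the boxes in the order of their entries, starting a new word
immediately after each descent. -/
def coA [Inhabited A] (I : Sentence A) (f : Filling) : Sentence A :=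
  if nBoxes f = 0 then [] else splitByComp (readWord I f) (compOf (descList f) (nBoxes f))

/-- `L_{J,C}`: the number of standard colored immaculate tableaux of shape `J`
with colored descent composition `C`. -/
noncomputable def LJC [Inhabited A] (J C : Sentence A) : ℕ :=
  Set.ncard {f : Filling | IsCIT J f ∧ IsStandardF f ∧ coA J f = C}

/-! ### The colored quasisymmetric functions `QSym_A` -/

/-- A (normal form of a) monomial in the partially commutative variables `x_{a,i}`:
a pair consisting of the list of words `(w_1, …, w_m)` and the list of (strictly
increasing, positive) second indices `(j_1 < … < j_m)`, representing
`x_{w_1,j_1} ⋯ x_{w_m,j_m}`. -/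
abbrev Mono (A : Type*) := List (List A) × List ℕ

/-- A colored quasisymmetric "series": a formal linear combination of monomials,
recorded by its coefficient function.  `QSym_A` itself is the span of the colored
monomial functions `MQ I` inside this space. -/
abbrev QSymA (A : Type*) := Mono A → ℚ

/-- Validity of a monomial normal form: words and indices match up, the indices are
strictly increasing positive integers, and all words are nonempty. -/
def ValidMono (m : Mono A) : Prop :=
  m.1.length = m.2.length ∧ m.2.Chain' (· < ·) ∧ (∀ j ∈ m.2, 1 ≤ j) ∧ ∀ w ∈ m.1, w ≠ []

open Classical in
/-- The colored monomial quasisymmetric function `M_I`: the sum of all monomials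
`x_{w_1,j_1} ⋯ x_{w_m,j_m}` with `j_1 < … < j_m`, where `I = (w_1, …, w_m)`. -/
noncomputable def MQ (I : Sentence A) : QSymA A := fun m =>
  if m.1 = I ∧ ValidMono m then 1 else 0

/-- The largest entry of a filling. -/
def maxEntry (f : Filling) : ℕ := f.flatten.foldr max 0

/-- The monomial `x_T` of a colored immaculate tableau `T = f` of shape `I`:
for `T` of type `B = (u_1, …, u_j)` it is `x_{u_1,1} x_{u_2,2} ⋯ x_{u_j,j}`
(empty words are skipped). -/
def monoOf (I : Sentence A) (f : Filling) : Mono A :=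
  let vs := ((List.range (maxEntry f)).map (· + 1)).filter (fun v => !(typeWord I f v).isEmpty)
  (vs.map (typeWord I f), vs)

/-- The colored dual immaculate function `𝔖*_J = Σ_T x_T`, the sum of the monomials of all
colored immaculate tableaux `T` of shape `J` (its coefficient at a monomial `m` is the
number of such tableaux with `x_T = m`). -/
noncomputable def dualImm (J : Sentence A) : QSymA A := fun m =>
  (Set.ncard {f : Filling | IsCIT J f ∧ monoOf J f = m} : ℚ)

/-- The colored fundamental quasisymmetric function `F_I = Σ_{J ⪯ I} M_J`. -/
noncomputable def FQ (I : Sentence A) : QSymA A :=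
  ∑ᶠ J ∈ {J : Sentence A | Refines J I}, MQ J

/-! ### The colored immaculate descent graph -/

/-- Edges of the colored immaculate descent graph: a directed edge from `I` to `J` (`J ≠ I`)
whenever some standard colored immaculate tableau of shape `I` has colored descent
composition `J`. -/
def IsEdge [Inhabited A] (I J : Sentence A) : Prop := J ≠ I ∧ LJC I J ≠ 0

/-- Directed paths from `I` to `K` in the colored immaculate descent graph, recorded by
their (nonempty) lists of successive vertices; the path `[I]` is the empty path at `I`. -/
def PathsFromTo [Inhabited A] (I K : Sentence A) : Set (List (Sentence A)) :=
  {p | p.head? = some I ∧ p.getLast? = some K ∧ p.Chain' IsEdge}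

/-- The signed weight `(-1)^{ℓ(𝒫)} prod(𝒫)` of a directed path `𝒫`:
`ℓ(𝒫)` is its number of edges and `prod(𝒫)` the product of its edge weights `L_{I,J}`. -/
noncomputable def pathWeight [Inhabited A] (p : List (Sentence A)) : ℚ :=
  ((-1 : ℚ)) ^ (p.length - 1) * ((p.zip p.tail).map (fun e => (LJC e.1 e.2 : ℚ))).prod

/-- `L⁻¹_{I,K} = Σ_𝒫 (-1)^{ℓ(𝒫)} prod(𝒫)`, summed over all directed paths `𝒫`
from `I` to `K` in the colored immaculate descent graph. -/
noncomputable def Linv [Inhabited A] (I K : Sentence A) : ℚ :=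
  ∑ᶠ p ∈ PathsFromTo I K, pathWeight p

/-! ### The colored noncommutative symmetric functions `NSym_A` -/

/-- A formal series over the complete homogeneous basis `{H_I}` of `NSym_A`, recorded by its
coefficient function on (weak) sentences.  `NSym_A` itself consists of the finitely
supported elements supported on genuine sentences; see `InNSym`. -/
abbrev NSymA (A : Type*) := Sentence A → ℚ

/-- Membership in `NSym_A` proper: finitely supported, and supported on genuine sentences. -/
def InNSym (f : NSymA A) : Prop :=
  (Function.support f).Finite ∧ ∀ I, f I ≠ 0 → IsSentence I

open Classical in
/-- The colored complete homogeneous noncommutative symmetric function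
`H_I = H_{w_1} ⋯ H_{w_k}`. -/
noncomputable def Hd (I : Sentence A) : NSymA A := fun J => if J = I then 1 else 0

/-- `H_w` for a single word `w`, with `H_∅ = 1`. -/
noncomputable def Hw (w : List A) : NSymA A := if w.isEmpty then Hd [] else Hd [w]

/-- Multiplication in `NSym_A` (the concatenation product, extended to series):
`H_I · H_J = H_{I ⬝ J}`. -/
def mulN (f g : NSymA A) : NSymA A := fun I =>
  ∑ j ∈ Finset.range (I.length + 1), f (I.take j) * g (I.drop j)

/-- The duality pairing `⟨·,·⟩ : NSym_A × QSym_A → ℚ`, determined by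
`⟨H_I, M_J⟩ = δ_{I,J}`: the `M_I`-coefficient of a quasisymmetric function is its
coefficient on the monomial `x_{w_1,1} x_{w_2,2} ⋯ x_{w_k,k}`. -/
noncomputable def pairNQ (G : NSymA A) (F : QSymA A) : ℚ :=
  ∑ᶠ I ∈ {I : Sentence A | IsSentence I}, G I * F (I, List.range' 1 I.length)

/-- All ways of splitting each word of a list of words into a prefix and a suffix. -/
def splitsOf : List (List A) → List (List (List A) × List (List A))
  | [] => [([], [])]
  | w :: ws =>
      (((splitsOf ws).map (fun p =>
        (List.range (w.length + 1)).map (fun t => (w.take t :: p.1, w.drop t :: p.2))))).flatten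

/-- Restriction of a candidate monomial: keep only the nonempty words together with
their indices. -/
def restrictMono (ws : List (List A)) (js : List ℕ) : Mono A :=
  let ps := (ws.zip js).filter (fun p => !p.1.isEmpty)
  (ps.map Prod.fst, ps.map Prod.snd)

/-- The product of colored quasisymmetric series: the coefficient of a monomial in `F·G`
is the sum, over all ways of writing each of its words as a concatenation of a word of a
monomial of `F` (on the left) and a word of a monomial of `G` (on the right), of the
products of the corresponding coefficients. -/
def mulQ (F G : QSymA A) : QSymA A := fun m =>
  ((splitsOf m.1).map (fun p => F (restrictMono p.1 m.2) * G (restrictMono p.2 m.2))).sum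

/-- The right perp operator `M^⊸` of `M ∈ QSym_A`, the linear operator on `NSym_A`
determined by `⟨M^⊸(H), G⟩ = ⟨H, G·M⟩`; explicitly, for the dual bases `{M_I}` and `{H_I}`,
`M^⊸(H) = Σ_I ⟨H, M_I · M⟩ H_I`. -/
noncomputable def rperp (M : QSymA A) (H : NSymA A) : NSymA A :=
  ∑ᶠ I ∈ {I : Sentence A | IsSentence I}, pairNQ H (mulQ (MQ I) M) • Hd I

/-- The colored noncommutative Bernstein operator
`𝔹_v = Σ_u Σ_{Q : w(Q^r) = u} (-1)^{ℓ(Q)} H_{v·u} · (Σ_{S ⪰ Q} M_S^⊸)`,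
where `Q` runs over all sentences, `u = w(Q^r)` is the concatenation of the words of `Q`
in reverse order, and `S` runs over all coarsenings of `Q`. -/
noncomputable def Bern (v : List A) (f : NSymA A) : NSymA A :=
  ∑ᶠ Q ∈ {Q : Sentence A | IsSentence Q},
    ((-1 : ℚ)) ^ Q.length •
      mulN (Hw (v ++ Q.reverse.flatten))
        (∑ᶠ S ∈ {S : Sentence A | Refines Q S}, rperp (MQ S) f)

/-- The colored immaculate function `𝔖_J = 𝔹_{v_1} 𝔹_{v_2} ⋯ 𝔹_{v_h}(1)`. -/
noncomputable def ImmS (J : Sentence A) : NSymA A := J.foldr Bern (Hd [])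

/-- The colored ribbon function `R_I = Σ_{J ⪰ I} (-1)^{ℓ(J) - ℓ(I)} H_J`. -/
noncomputable def Rib (I : Sentence A) : NSymA A :=
  ∑ᶠ J ∈ {J : Sentence A | Refines I J}, ((-1 : ℚ)) ^ (I.length - J.length) • Hd J

/-- The Pieri relation `J ⊂_w K` for a sentence `J = (v_1, …, v_h)` and a word `w`:
`K = (u_1, …, u_g)` with `h ≤ g ≤ h+1` (setting `v_{h+1} = ∅`) and `u_j = v_j · q_j`
for words `q_j` (possibly empty) whose reversed concatenation `q_g ⋯ q_1` equals `w`. -/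
def PieriRel (J : Sentence A) (w : List A) (K : Sentence A) : Prop :=
  J.length ≤ K.length ∧ K.length ≤ J.length + 1 ∧
  ∃ q : List (List A), q.length = K.length ∧ q.reverse.flatten = w ∧
    ∀ j < K.length, K.getD j [] = J.getD j [] ++ q.getD j []

/-- Right containment of a weak sentence `K` in `J`: same length, and each word of `K` is a
suffix of the corresponding word of `J`. -/
def RightContained (K J : Sentence A) : Prop :=
  K.length = J.length ∧ ∀ i < J.length, (K.getD i []).IsSuffix (J.getD i [])

/-- The weak sentence `J/_R K`: remove each word of `K` from the right end of the
corresponding word of `J`. -/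
def rightQuot (J K : Sentence A) : Sentence A :=
  List.zipWith (fun v u => v.take (v.length - u.length)) J K

/-- Left containment `J ⊆_L I`: `ℓ(J) ≤ ℓ(I)` and each word of `J` is a prefix of the
corresponding word of `I`. -/
def LeftContained (J I : Sentence A) : Prop :=
  J.length ≤ I.length ∧ ∀ i < J.length, (J.getD i []).IsPrefix (I.getD i [])

/-- A skew colored immaculate tableau of shape `I/J`: a filling of the active boxes
(the `i`-th row keeps the last `|w_i| - |v_i|` boxes) with positive integers, rows weakly
increasing left to right, and the entries in the (active part of the) first column of `I`
strictly increasing top to bottom. -/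
def IsSkewCIT (I J : Sentence A) (f : Filling) : Prop :=
  f.map List.length =
    (List.range I.length).map (fun i => (I.getD i []).length - (J.getD i []).length) ∧
  (∀ row ∈ f, row.Chain' (· ≤ ·)) ∧
  ((List.range I.length).filterMap
    (fun i => if (J.getD i []).length = 0 then (f.getD i []).head? else none)).Chain' (· < ·) ∧
  (∀ x ∈ f.flatten, 1 ≤ x)

/-- The word of the type of a skew tableau at value `v`: the colors of the active boxes with
entry `v`, read left to right, bottom to top. -/
def skewTypeWord (I J : Sentence A) (f : Filling) (v : ℕ) : List A :=
  (((List.range I.length).reverse).map (fun i =>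
    rowWith ((I.getD i []).drop (J.getD i []).length) (f.getD i []) v)).flatten

/-- `SkewHasType I J f K` : the skew tableau `f` of shape `I/J` has type `K`. -/
def SkewHasType (I J : Sentence A) (f : Filling) (K : Sentence A) : Prop :=
  ∀ v, 1 ≤ v → skewTypeWord I J f v = K.getD (v - 1) []

/-! ### The complement involution `ψ` and the row-strict functions -/

/-- The complement `I^c` of a sentence: the unique sentence with the same maximal word
that splits exactly where `I` does not. -/
def complSent (I : Sentence A) : Sentence A :=
  let w := I.flatten
  let n := w.length
  if n = 0 then []
  else
    let splits := (((wl I).scanl (· + ·) 0).drop 1).dropLast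
    let csplits := (List.range' 1 (n - 1)).filter (fun i => !(splits.contains i))
    splitByComp w (compOf csplits n)

/-- The `M_I`-coefficient of a colored quasisymmetric function. -/
noncomputable def coeffM (G : QSymA A) (I : Sentence A) : ℚ := G (I, List.range' 1 I.length)

/-- The image of `M_I` under `ψ`, via `M_I = Σ_{J ⪯ I} (-1)^{ℓ(J)-ℓ(I)} F_J` and
`ψ(F_J) = F_{J^c}`. -/
noncomputable def psiM (I : Sentence A) : QSymA A :=
  ∑ᶠ J ∈ {J : Sentence A | Refines J I}, ((-1 : ℚ)) ^ (J.length - I.length) • FQ (complSent J)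

/-- The linear involution `ψ` of `QSym_A`, determined by `ψ(F_I) = F_{I^c}`. -/
noncomputable def psiQ (G : QSymA A) : QSymA A :=
  ∑ᶠ I ∈ {I : Sentence A | IsSentence I}, coeffM G I • psiM I

/-- A colored row-strict immaculate tableau of shape `I`: entries strictly increase left to
right along each row and weakly increase top to bottom down the first column. -/
def IsCRSIT (I : Sentence A) (f : Filling) : Prop :=
  f.map List.length = I.map List.length ∧
  (∀ row ∈ f, row.Chain' (· < ·)) ∧
  (f.filterMap List.head?).Chain' (· ≤ ·) ∧
  (∀ x ∈ f.flatten, 1 ≤ x)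

/-- The word of the type of a row-strict tableau at value `v`: the colors of the boxes with
entry `v`, read left to right, top to bottom. -/
def rsTypeWord (I : Sentence A) (f : Filling) (v : ℕ) : List A :=
  ((I.zip f).map (fun p => rowWith p.1 p.2 v)).flatten

/-- The monomial `x_T` of a colored row-strict immaculate tableau. -/
def rsMonoOf (I : Sentence A) (f : Filling) : Mono A :=
  let vs := ((List.range (maxEntry f)).map (· + 1)).filter (fun v => !(rsTypeWord I f v).isEmpty)
  (vs.map (rsTypeWord I f), vs)

/-- The colored row-strict dual immaculate function `ℛ𝔖*_J = Σ_T x_T`, summed over all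
colored row-strict immaculate tableaux `T` of shape `J`. -/
noncomputable def rsDualImm (J : Sentence A) : QSymA A := fun m =>
  (Set.ncard {f : Filling | IsCRSIT J f ∧ rsMonoOf J f = m} : ℚ)

/-- `α ⪰ β` in the reverse lexicographic order on compositions: at the first index where
they differ, `α` has the *smaller* entry (padding with zeros). -/
def RevLexGE (α β : List ℕ) : Prop :=
  α = β ∨ ∃ i, (∀ j < i, α.getD j 0 = β.getD j 0) ∧ α.getD i 0 < β.getD i 0

/-! ### Uncolored (ordinary) versions, for `QSym` -/

namespace Uncolored

/-- A composition: a list of positive integers. -/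
def IsComposition (α : List ℕ) : Prop := ∀ a ∈ α, 1 ≤ a

/-- `β ⪯ α`: the composition `α` is obtained by summing adjacent parts of `β`. -/
def RefinesC (β α : List ℕ) : Prop :=
  ∃ P : List (List ℕ), (∀ p ∈ P, p ≠ []) ∧ P.flatten = β ∧ P.map List.sum = α

/-- A monomial `x_{i_1}^{a_1} ⋯ x_{i_m}^{a_m}` recorded by its exponents and its
strictly increasing positive indices. -/
abbrev MonoU := List ℕ × List ℕ

/-- A quasisymmetric "series", recorded by its coefficient function on monomials.
`QSym` is the span of the monomial functions `MU α` inside this space. -/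
abbrev QSymU := MonoU → ℚ

/-- Validity of a monomial: matching lengths, strictly increasing positive indices,
positive exponents. -/
def ValidMonoU (m : MonoU) : Prop :=
  m.1.length = m.2.length ∧ m.2.Chain' (· < ·) ∧ (∀ j ∈ m.2, 1 ≤ j) ∧ ∀ a ∈ m.1, 1 ≤ a

open Classical in
/-- The monomial quasisymmetric function `M_α`. -/
noncomputable def MU (α : List ℕ) : QSymU := fun m =>
  if m.1 = α ∧ ValidMonoU m then 1 else 0

/-- The fundamental quasisymmetric function `F_α = Σ_{β ⪯ α} M_β`. -/
noncomputable def FU (α : List ℕ) : QSymU :=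
  ∑ᶠ β ∈ {β : List ℕ | RefinesC β α}, MU β

/-- An immaculate tableau of shape `α`: positive integer entries, rows weakly increasing
left to right, first column strictly increasing top to bottom. -/
def IsIT (α : List ℕ) (f : Filling) : Prop :=
  f.map List.length = α ∧
  (∀ row ∈ f, row.Chain' (· ≤ ·)) ∧
  (f.filterMap List.head?).Chain' (· < ·) ∧
  (∀ x ∈ f.flatten, 1 ≤ x)

/-- The number of boxes of `f` with entry `v`. -/
def countOf (f : Filling) (v : ℕ) : ℕ := (f.flatten.filter (fun x => x == v)).length

/-- The monomial `x^T` of an immaculate tableau `T` of type `β`: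
`x_1^{β_1} ⋯ x_h^{β_h}` (zero exponents skipped). -/
def monoOfU (f : Filling) : MonoU :=
  let vs := ((List.range (maxEntry f)).map (· + 1)).filter (fun v => decide (countOf f v ≠ 0))
  (vs.map (countOf f), vs)

/-- The dual immaculate function `𝔖*_α = Σ_T x^T`, summed over all immaculate tableaux
of shape `α`. -/
noncomputable def dualImmU (α : List ℕ) : QSymU := fun m =>
  (Set.ncard {f : Filling | IsIT α f ∧ monoOfU f = m} : ℚ)

/-- The descent composition `co(U)` of a standard immaculate tableau. -/
def descComp (f : Filling) : List ℕ :=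
  if nBoxes f = 0 then [] else compOf (descList f) (nBoxes f)

/-- `L_{α,β}`: the number of standard immaculate tableaux of shape `α` with descent
composition `β`. -/
noncomputable def LU (α β : List ℕ) : ℕ :=
  Set.ncard {f : Filling | IsIT α f ∧ IsStandardF f ∧ descComp f = β}

/-- Edges of the immaculate descent graph `𝔇^n`. -/
def IsEdgeU (α β : List ℕ) : Prop := β ≠ α ∧ LU α β ≠ 0

/-- Directed paths from `α` to `β` in the immaculate descent graph, recorded by their
lists of successive vertices; `[α]` is the empty path at `α`. -/
def PathsU (α β : List ℕ) : Set (List (List ℕ)) :=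
  {p | p.head? = some α ∧ p.getLast? = some β ∧ p.Chain' IsEdgeU}

/-- The signed weight `(-1)^{ℓ(𝒫)} prod(𝒫)` of a path. -/
noncomputable def pathWeightU (p : List (List ℕ)) : ℚ :=
  ((-1 : ℚ)) ^ (p.length - 1) * ((p.zip p.tail).map (fun e => (LU e.1 e.2 : ℚ))).prod

/-- `L⁻¹_{α,β} = Σ_𝒫 (-1)^{ℓ(𝒫)} prod(𝒫)`, over directed paths from `α` to `β` in `𝔇^n`. -/
noncomputable def LinvU (α β : List ℕ) : ℚ :=
  ∑ᶠ p ∈ PathsU α β, pathWeightU p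

end Uncolored

end ColoredImm

namespace ColoredImm
variable {A : Type*}

/-- Sum over all ways of cutting a word into a prefix and a suffix. -/
def wsum : List A → (List A → List A → ℚ) → ℚ
  | [], F => F [] []
  | a :: w, F => F [] (a :: w) + wsum w (fun p s => F (a :: p) s)

lemma wsum_eq (w : List A) (F : List A → List A → ℚ) :
    ((List.range (w.length + 1)).map (fun t => F (w.take t) (w.drop t))).sum = wsum w F := by
  induction w generalizing F with
  | nil => simp [wsum]
  | cons a w ih =>
    rw [List.length_cons, List.range_succ_eq_map, wsum, ← ih]
    simp [Function.comp_def]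

lemma wsum_add (w : List A) (F G : List A → List A → ℚ) :
    wsum w (fun p s => F p s + G p s) = wsum w F + wsum w G := by
  induction w generalizing F G with
  | nil => simp [wsum]
  | cons a w ih => simp only [wsum, ih]; ring

lemma wsum_zero (w : List A) : wsum w (fun _ _ => (0 : ℚ)) = 0 := by
  induction w with
  | nil => simp [wsum]
  | cons a w ih => simp [wsum, ih]

lemma wsum_mul (w : List A) (c : ℚ) (F : List A → List A → ℚ) :
    wsum w (fun p s => c * F p s) = c * wsum w F := by
  induction w generalizing F with
  | nil => simp [wsum]
  | cons a w ih => simp only [wsum, ih]; ring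

lemma wsum_list {ι : Type*} (w : List A) (l : List ι) (F : List A → List A → ι → ℚ) :
    wsum w (fun p s => (l.map (F p s)).sum) = (l.map (fun x => wsum w (fun p s => F p s x))).sum := by
  induction l with
  | nil => simp [wsum_zero]
  | cons x l ih => simp [wsum_add, ih]

lemma wsum_assoc (w : List A) (F : List A → List A → List A → ℚ) :
    wsum w (fun p s => wsum p (fun p' p'' => F p' p'' s)) =
      wsum w (fun p' r => wsum r (fun p'' s => F p' p'' s)) := by
  induction w generalizing F with
  | nil => simp [wsum]
  | cons a w ih =>
    simp only [wsum, wsum_add, ih]; ring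

lemma wsum_last (w : List A) (G : List A → ℚ) :
    wsum w (fun p r => if r = [] then G p else 0) = G w := by
  induction w generalizing G with
  | nil => simp [wsum]
  | cons a w ih => simp [wsum, ih]

/-- Sum over all splittings of a weak sentence. -/
def ssum (K : Sentence A) (F : Sentence A → Sentence A → ℚ) : ℚ :=
  ((splitsOf K).map (fun p => F p.1 p.2)).sum

lemma ssum_nil (F : Sentence A → Sentence A → ℚ) : ssum [] F = F [] [] := by
  simp [ssum, splitsOf]

lemma ssum_cons (w : List A) (K : Sentence A) (F : Sentence A → Sentence A → ℚ) :
    ssum (w :: K) F = ssum K (fun p s => wsum w (fun a b => F (a :: p) (b :: s))) := by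
  simp only [ssum, splitsOf, List.map_flatten, List.sum_flatten, List.map_map, Function.comp_def]
  congr 1
  apply List.map_congr_left
  intro p _
  exact wsum_eq w (fun a b => F (a :: p.1) (b :: p.2))

lemma ssum_cons' (w : List A) (K : Sentence A) (F : Sentence A → Sentence A → ℚ) :
    ssum (w :: K) F = wsum w (fun a b => ssum K (fun p s => F (a :: p) (b :: s))) := by
  rw [ssum_cons]
  exact (wsum_list w (splitsOf K) (fun a b p => F (a :: p.1) (b :: p.2))).symm

lemma ssum_congr {K : Sentence A} {F G : Sentence A → Sentence A → ℚ} (h : ∀ p s, F p s = G p s) :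
    ssum K F = ssum K G := by
  have : F = G := by funext p s; exact h p s
  rw [this]

lemma wsum_congr {K : List A} {F G : List A → List A → ℚ} (h : ∀ p s, F p s = G p s) :
    wsum K F = wsum K G := by
  have : F = G := by funext p s; exact h p s
  rw [this]

open Classical in
/-- The row operator. -/
noncomputable def R (u z : List A) (ψ : Sentence A → ℚ) (L : Sentence A) : ℚ :=
  ssum L (fun p s => if u ++ s.flatten = z then ψ p else 0)

lemma R_cons (u z : List A) (ψ : Sentence A → ℚ) (a : List A) (L : Sentence A) :
    R u z ψ (a :: L) = wsum a (fun a' a'' => R (u ++ a'') z (fun p => ψ (a' :: p)) L) := by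
  simp only [R]
  rw [ssum_cons']
  apply wsum_congr
  intro p s
  apply ssum_congr
  intro p' s'
  rw [List.flatten_cons, List.append_assoc]

lemma R_nil (u z : List A) (ψ : Sentence A → ℚ) [Decidable (u = z)] :
    R u z ψ [] = if u = z then ψ [] else 0 := by
  simp [R, ssum_nil]

/-- Refinements of a single word. -/
def refs1 : List A → List (Sentence A)
  | [] => [[]]
  | a :: w => (refs1 w).flatMap (fun Q => ([a] :: Q) ::
      (match Q with
       | [] => []
       | q :: Q' => [(a :: q) :: Q']))

/-- Refinements of a weak sentence. -/
def refs : Sentence A → List (Sentence A)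
  | [] => [[]]
  | s :: S => (refs1 s).flatMap (fun Q1 => (refs S).map (fun Q => Q1 ++ Q))

lemma sum_flatMap' {α β : Type*} (l : List α) (f : α → List β) (g : β → ℚ) :
    ((l.flatMap f).map g).sum = (l.map (fun x => ((f x).map g).sum)).sum := by
  induction l with
  | nil => simp
  | cons a l ih => simp [ih]

lemma refs1_first (w : List A) (G : List A → Sentence A → ℚ) :
    wsum w (fun p s => if p = [] then 0 else ((refs1 s).map (fun Q => G p Q)).sum) =
      ((refs1 w).map (fun Q => match Q with
        | [] => 0
        | q :: Q' => G q Q')).sum := by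
  induction w generalizing G with
  | nil => simp [wsum, refs1]
  | cons a w ih =>
    have h : wsum w (fun p s => ((refs1 s).map (fun Q => G (a :: p) Q)).sum) =
        ((refs1 w).map (fun Q => G [a] Q)).sum +
        wsum w (fun p s => if p = [] then 0 else ((refs1 s).map (fun Q => G (a :: p) Q)).sum) := by
      cases w with
      | nil => simp [wsum]
      | cons b w => simp [wsum]
    simp only [wsum, refs1, sum_flatMap']
    simp only [if_true, reduceCtorEq, if_false, zero_add]
    rw [h, ih (fun q Q => G (a :: q) Q), ← List.sum_map_add]
    congr 1
    apply List.map_congr_left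
    intro Q _
    cases Q <;> simp

lemma refs1_flatten (w : List A) : ∀ Q ∈ refs1 w, Q.flatten = w := by
  induction w with
  | nil => simp [refs1]
  | cons a w ih =>
    intro Q hQ
    simp only [refs1, List.mem_flatMap] at hQ
    obtain ⟨Q0, h0, h1⟩ := hQ
    have := ih Q0 h0
    cases Q0 with
    | nil => simp at h1; subst h1; simpa using this
    | cons q Q' => simp at h1; rcases h1 with h1 | h1 <;> subst h1 <;> simpa using this

lemma cancel (r : List A) (G : List A → ℚ) :
    wsum r (fun p s => ((refs1 s).map
      (fun Q => (-1 : ℚ) ^ Q.length * G (Q.reverse.flatten ++ p))).sum) =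
      if r = [] then G [] else 0 := by
  cases r with
  | nil => simp [wsum, refs1]
  | cons a w =>
    have h := refs1_first (a :: w) (fun p Q => (-1 : ℚ) ^ Q.length * G (Q.reverse.flatten ++ p))
    simp only [wsum, if_true, reduceCtorEq, if_false, zero_add] at h ⊢
    rw [h, ← List.sum_map_add]
    apply List.sum_eq_zero
    intro x hx
    rw [List.mem_map] at hx
    obtain ⟨Q, hQ, rfl⟩ := hx
    have := refs1_flatten _ Q hQ
    cases Q with
    | nil => simp at this
    | cons q Q => simp [pow_succ]

lemma list_sum_comm {α β : Type*} (l : List α) (l' : List β) (f : α → β → ℚ) :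
    (l.map (fun x => (l'.map (fun y => f x y)).sum)).sum =
    (l'.map (fun y => (l.map (fun x => f x y)).sum)).sum := by
  induction l with
  | nil => simp
  | cons a l ih => simp [ih, List.sum_map_add]

theorem key (M K : Sentence A) (v w : List A) (ψ : Sentence A → ℚ) :
    ssum M (fun p s => ((refs s).map
      (fun Q => (-1 : ℚ) ^ Q.length * R (v ++ Q.reverse.flatten) w ψ (p ++ K))).sum) =
    R v w (fun L => ψ (M ++ L)) K := by
  induction M generalizing ψ with
  | nil => simp [ssum_nil, refs]
  | cons a M ih =>
    have ih' := ih (fun L => ψ (a :: L))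
    simp only [List.cons_append]
    rw [ssum_cons, ← ih']
    apply ssum_congr
    intro p s
    simp only [refs, sum_flatMap', List.map_map, Function.comp_def, List.cons_append, R_cons]
    have h1 : ∀ b c : List A, ((refs1 c).map (fun Q1 => ((refs s).map (fun Q =>
        (-1 : ℚ) ^ (Q1 ++ Q).length * wsum b (fun a' a'' =>
          R (v ++ (Q1 ++ Q).reverse.flatten ++ a'') w (fun p => ψ (a' :: p)) (p ++ K)))).sum)).sum
        = ((refs s).map (fun Q => (-1 : ℚ) ^ Q.length * wsum b (fun a' a'' =>
          ((refs1 c).map (fun Q1 => (-1 : ℚ) ^ Q1.length *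
            R (v ++ Q.reverse.flatten ++ (Q1.reverse.flatten ++ a'')) w
              (fun p => ψ (a' :: p)) (p ++ K))).sum))).sum := by
      intro b c
      rw [list_sum_comm]
      congr 1
      apply List.map_congr_left
      intro Q _
      rw [wsum_list, ← List.sum_map_mul_left]
      congr 1
      apply List.map_congr_left
      intro Q1 _
      rw [wsum_mul]
      simp only [List.length_append, pow_add, List.reverse_append, List.flatten_append,
        List.append_assoc]
      ring
    simp only [h1]
    rw [wsum_list]
    congr 1
    apply List.map_congr_left
    intro Q _
    rw [wsum_mul, wsum_assoc a (fun a' a'' c => ((refs1 c).map (fun Q1 => (-1 : ℚ) ^ Q1.length *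
            R (v ++ Q.reverse.flatten ++ (Q1.reverse.flatten ++ a'')) w
              (fun p => ψ (a' :: p)) (p ++ K))).sum)]
    congr 1
    have h2 : ∀ a' r : List A, wsum r (fun a'' c => ((refs1 c).map (fun Q1 => (-1 : ℚ) ^ Q1.length *
            R (v ++ Q.reverse.flatten ++ (Q1.reverse.flatten ++ a'')) w
              (fun p => ψ (a' :: p)) (p ++ K))).sum) = if r = [] then
              R (v ++ Q.reverse.flatten ++ []) w (fun p => ψ (a' :: p)) (p ++ K) else 0 := by
      intro a' r
      exact cancel r (fun x => R (v ++ Q.reverse.flatten ++ x) w (fun p => ψ (a' :: p)) (p ++ K))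
    simp only [h2]
    rw [wsum_last a (fun a' => R (v ++ Q.reverse.flatten ++ []) w (fun p => ψ (a' :: p)) (p ++ K))]
    simp

open Classical in
/-- Row-by-row count of immaculate tableaux. -/
noncomputable def cntU : Sentence A → Sentence A → ℚ
  | [], K => if ∀ k ∈ K, k = [] then 1 else 0
  | w :: U, K => match K.dropWhile (fun x => x.isEmpty) with
    | [] => 0
    | x :: K' => R x w (cntU U) K'

lemma cntU_cons_nil (w : List A) (U K : Sentence A) :
    cntU (w :: U) ([] :: K) = cntU (w :: U) K := by
  simp [cntU]

lemma cntU_cons_cons (w : List A) (U : Sentence A) (x : List A) (hx : x ≠ []) (K : Sentence A) :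
    cntU (w :: U) (x :: K) = R x w (cntU U) K := by
  have : x.isEmpty = false := by simpa using hx
  simp [cntU, List.dropWhile, this]

/-- Row-by-row count of skew immaculate tableaux. -/
noncomputable def skewc : Sentence A → Sentence A → Sentence A → ℚ
  | [], I, K => cntU I K
  | _ :: _, [], _ => 0
  | v :: J, w :: I, K => R v w (skewc J I) K

/-- Invariance under inserting empty words. -/
def Inv (ψ : Sentence A → ℚ) : Prop := ∀ L1 L2, ψ (L1 ++ [] :: L2) = ψ (L1 ++ L2)

lemma R_inv (u w : List A) (ψ : Sentence A → ℚ) (h : Inv ψ) : Inv (R u w ψ) := by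
  intro L1 L2
  induction L1 generalizing u ψ with
  | nil =>
    have : (fun p => ψ ([] :: p)) = ψ := by funext p; exact h [] p
    simp [R_cons, wsum, this]
  | cons a L1 ih =>
    simp only [List.cons_append, R_cons]
    apply wsum_congr
    intro p s
    apply ih
    intro M1 M2
    exact h (p :: M1) M2

lemma cntU_inv (I : Sentence A) : Inv (cntU I) := by
  induction I with
  | nil => intro L1 L2; simp [cntU, or_imp, forall_and]
  | cons w U ih =>
    intro L1 L2
    induction L1 with
    | nil => simp [cntU_cons_nil]
    | cons x L1 ih2 =>
      by_cases hx : x = []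
      · subst hx; simpa [cntU_cons_nil] using ih2
      · simp only [List.cons_append, cntU_cons_cons _ _ _ hx]
        exact R_inv _ _ _ ih L1 L2

lemma Inv.flat {ψ : Sentence A → ℚ} (h : Inv ψ) (p K : Sentence A) :
    ψ (flattenWS p ++ K) = ψ (p ++ K) := by
  suffices ∀ L, ψ (L ++ flattenWS p ++ K) = ψ (L ++ p ++ K) by simpa using this []
  induction p with
  | nil => simp [flattenWS]
  | cons a p ih =>
    intro L
    by_cases ha : a = []
    · subst ha
      have := h L (p ++ K)
      have h2 := ih L
      simp [flattenWS] at h2 this ⊢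
      rw [this, h2]
    · have hb : a.isEmpty = false := by simpa using ha
      have h2 := ih (L ++ [a])
      simpa [flattenWS, hb] using h2

lemma refs_flat (s : Sentence A) : refs (flattenWS s) = refs s := by
  induction s with
  | nil => simp [flattenWS]
  | cons a s ih =>
    by_cases ha : a = []
    · subst ha
      simpa [flattenWS, refs, refs1] using ih
    · have hb : a.isEmpty = false := by simpa using ha
      simp only [flattenWS] at ih
      simp [flattenWS, hb, refs, ih]

end ColoredImm

namespace ColoredImm
variable {A : Type*}

lemma support_list_sum {ι α M : Type*} [AddCommMonoid M] (P : Set ι) (l : List α) (f : ι → α → M)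
    (h : ∀ a ∈ l, (P ∩ Function.support (fun i => f i a)).Finite) :
    (P ∩ Function.support (fun i => (l.map (f i)).sum)).Finite := by
  induction l with
  | nil => simp
  | cons a l ih =>
    refine Set.Finite.subset ((h a (by simp)).union (ih (fun b hb => h b (by simp [hb])))) ?_
    rintro i ⟨hP, hi⟩
    by_contra hc
    simp only [Set.mem_union, Set.mem_inter_iff, hP, true_and, Function.mem_support, not_or,
      not_not] at hc
    apply hi
    simp [hc.1, hc.2]

lemma finsum_mem_list' {ι α M : Type*} [AddCommMonoid M] (P : Set ι) (l : List α) (f : ι → α → M)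
    (h : ∀ a ∈ l, (P ∩ Function.support (fun i => f i a)).Finite) :
    ∑ᶠ i ∈ P, (l.map (f i)).sum = (l.map (fun a => ∑ᶠ i ∈ P, f i a)).sum := by
  induction l with
  | nil => simp
  | cons a l ih =>
    have h1 := h a (by simp)
    have h2 : ∀ b ∈ l, (P ∩ Function.support (fun i => f i b)).Finite :=
      fun b hb => h b (by simp [hb])
    simp only [List.map_cons, List.sum_cons]
    rw [finsum_mem_add_distrib' h1 (support_list_sum P l f h2), ih h2]

lemma finsum_mem_list {ι α M : Type*} [AddCommMonoid M] (P : Set ι) (l : List α) (f : ι → α → M)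
    (h : ∀ a ∈ l, (Function.support (fun i => f i a)).Finite) :
    ∑ᶠ i ∈ P, (l.map (f i)).sum = (l.map (fun a => ∑ᶠ i ∈ P, f i a)).sum :=
  finsum_mem_list' P l f (fun a ha => (h a ha).subset Set.inter_subset_right)

lemma finsum_mem_single {ι M : Type*} [AddCommMonoid M] (P : Set ι) (f : ι → M) (a : ι)
    (ha : a ∈ P) (h : ∀ i, i ≠ a → f i = 0) : ∑ᶠ i ∈ P, f i = f a := by
  rw [finsum_mem_def, finsum_eq_single _ a]
  · simp [ha]
  · intro i hi
    simp [Set.indicator, h i hi]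

/-- The linear combination of the `H_M` recorded by a list. -/
noncomputable def rep (l : List (ℚ × Sentence A)) : NSymA A :=
  (l.map (fun x => x.1 • Hd x.2)).sum

lemma list_sum_apply {α β : Type*} (l : List α) (f : α → β → ℚ) (b : β) :
    (l.map f).sum b = (l.map (fun a => f a b)).sum := by
  induction l with
  | nil => simp
  | cons a l ih => simp [ih]

lemma pair_rep (l : List (ℚ × Sentence A)) (hl : ∀ x ∈ l, IsSentence x.2) (G : QSymA A) :
    pairNQ (rep l) G = (l.map (fun x => x.1 * G (x.2, List.range' 1 x.2.length))).sum := by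
  have h0 : ∀ I : Sentence A, rep l I * G (I, List.range' 1 I.length) =
      (l.map (fun x => x.1 * Hd x.2 I * G (I, List.range' 1 I.length))).sum := by
    intro I
    rw [rep, list_sum_apply, ← List.sum_map_mul_right]
    rfl
  have hz : ∀ (x : ℚ × Sentence A) (I : Sentence A), I ≠ x.2 →
      x.1 * Hd x.2 I * G (I, List.range' 1 I.length) = 0 := by
    intro x I h
    simp [Hd, h]
  simp only [pairNQ, h0]
  rw [finsum_mem_list]
  · congr 1
    apply List.map_congr_left
    intro x hx
    rw [finsum_mem_single _ _ x.2 (hl x hx) (hz x)]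
    simp [Hd]
  · intro x _
    refine (Set.finite_singleton x.2).subset ?_
    intro I hI
    by_contra hc
    exact hI (hz x I hc)

/-- index list -/
def ix (l : List (ℚ × Sentence A)) : List (ℚ × Sentence A × Sentence A) :=
  l.flatMap (fun x => (splitsOf x.2).map (fun ps => (x.1, flattenWS ps.1, flattenWS ps.2)))

lemma flatten_sent (p : Sentence A) : IsSentence (flattenWS p) := by
  intro w hw
  simp [flattenWS] at hw
  exact hw.2

lemma ix_sent (l : List (ℚ × Sentence A)) : ∀ y ∈ ix l, IsSentence y.2.1 ∧ IsSentence y.2.2 := by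
  intro y hy
  simp only [ix, List.mem_flatMap, List.mem_map] at hy
  obtain ⟨x, _, ps, _, rfl⟩ := hy
  exact ⟨flatten_sent _, flatten_sent _⟩

lemma splits_len (K : Sentence A) : ∀ ps ∈ splitsOf K, ps.1.length = K.length ∧
    ps.2.length = K.length := by
  induction K with
  | nil => simp [splitsOf]
  | cons w K ih =>
    intro ps h
    simp only [splitsOf, List.mem_flatten, List.mem_map] at h
    obtain ⟨l, ⟨p, hp, rfl⟩, h2⟩ := h
    simp only [List.mem_map] at h2
    obtain ⟨t, _, rfl⟩ := h2
    have := ih p hp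
    simp [this]

lemma zip_filter_fst (p : Sentence A) (js : List ℕ) (h : p.length = js.length) :
    ((p.zip js).filter (fun q => !q.1.isEmpty)).map Prod.fst = flattenWS p := by
  induction p generalizing js with
  | nil => simp [flattenWS]
  | cons a p ih =>
    cases js with
    | nil => simp at h
    | cons j js =>
      have := ih js (by simpa using h)
      unfold flattenWS at this ⊢
      by_cases ha : a.isEmpty
      · simpa [ha] using this
      · simpa [ha] using this

lemma restrict_valid (p : Sentence A) (n : ℕ) (h : p.length = n) :
    (restrictMono p (List.range' 1 n)).1 = flattenWS p ∧
    ValidMono (restrictMono p (List.range' 1 n)) := by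
  have h1 : (restrictMono p (List.range' 1 n)).1 = flattenWS p :=
    zip_filter_fst p _ (by simp [h])
  have hsub : (restrictMono p (List.range' 1 n)).2.Sublist (List.range' 1 n) := by
    have : ((p.zip (List.range' 1 n)).map Prod.snd) = List.range' 1 n :=
      List.map_snd_zip (by simp [h])
    conv_rhs => rw [← this]
    exact List.filter_sublist.map _
  refine ⟨h1, ?_, ?_, ?_, ?_⟩
  · simp [restrictMono]
  · have : (List.range' 1 n).Pairwise (· < ·) := List.pairwise_lt_range'
    exact (this.sublist hsub).isChain
  · intro j hj
    have := hsub.subset hj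
    simp at this
    omega
  · rw [h1]
    exact flatten_sent p

open Classical in
lemma MQ_restrict (L p : Sentence A) (n : ℕ) (h : p.length = n) :
    MQ L (restrictMono p (List.range' 1 n)) = if flattenWS p = L then 1 else 0 := by
  have := restrict_valid p n h
  simp [MQ, this.1, this.2]

open Classical in
lemma pair_mul (l : List (ℚ × Sentence A)) (hl : ∀ x ∈ l, IsSentence x.2) (I S : Sentence A) :
    pairNQ (rep l) (mulQ (MQ I) (MQ S)) =
    ((ix l).map (fun y => if y.2.1 = I then (if y.2.2 = S then y.1 else 0) else 0)).sum := by
  rw [pair_rep l hl, ix, sum_flatMap']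
  congr 1
  apply List.map_congr_left
  intro x _
  rw [mulQ, ← List.sum_map_mul_left, List.map_map]
  congr 1
  apply List.map_congr_left
  intro ps hps
  obtain ⟨h1, h2⟩ := splits_len _ ps hps
  simp only [Function.comp]
  rw [MQ_restrict _ _ _ h1, MQ_restrict _ _ _ h2]
  split_ifs <;> simp

lemma list_sum_smul {α M : Type*} [AddCommGroup M] [Module ℚ M] (l : List α) (f : α → ℚ) (m : M) :
    (l.map f).sum • m = (l.map (fun a => f a • m)).sum := by
  induction l with
  | nil => simp
  | cons a l ih => simp [add_smul, ih]

open Classical in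
lemma rperp_rep (l : List (ℚ × Sentence A)) (hl : ∀ x ∈ l, IsSentence x.2) (S : Sentence A) :
    rperp (MQ S) (rep l) =
    ((ix l).map (fun y => if y.2.2 = S then y.1 • Hd y.2.1 else 0)).sum := by
  unfold rperp
  simp only [pair_mul l hl, list_sum_smul]
  have hz : ∀ (y : ℚ × Sentence A × Sentence A) (I : Sentence A), I ≠ y.2.1 →
      (if y.2.1 = I then (if y.2.2 = S then y.1 else 0) else 0) • Hd I = (0 : NSymA A) := by
    intro y I h
    rw [if_neg (Ne.symm h), zero_smul]
  rw [finsum_mem_list]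
  · congr 1
    apply List.map_congr_left
    intro y hy
    rw [finsum_mem_single _ _ y.2.1 (ix_sent l y hy).1 (hz y)]
    by_cases h : y.2.2 = S <;> simp [h]
  · intro y _
    refine (Set.finite_singleton y.2.1).subset ?_
    intro I hI
    by_contra hc
    exact hI (hz y I hc)

open Classical in
lemma sumS_rep (l : List (ℚ × Sentence A)) (hl : ∀ x ∈ l, IsSentence x.2) (Q : Sentence A) :
    ∑ᶠ S ∈ {S : Sentence A | Refines Q S}, rperp (MQ S) (rep l) =
    ((ix l).map (fun y => if Refines Q y.2.2 then y.1 • Hd y.2.1 else 0)).sum := by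
  simp only [rperp_rep l hl]
  rw [finsum_mem_list]
  · congr 1
    apply List.map_congr_left
    intro y hy
    by_cases h : Refines Q y.2.2
    · rw [finsum_mem_single _ _ y.2.2 h]
      · simp [h]
      · intro i hi
        rw [if_neg (Ne.symm hi)]
    · rw [if_neg h]
      apply finsum_mem_eq_zero_of_forall_eq_zero
      intro S hS
      rw [if_neg]
      rintro rfl
      exact h hS
  · intro y _
    refine (Set.finite_singleton y.2.2).subset ?_
    intro S hS
    by_contra hc
    exact hS (if_neg (fun h => hc h.symm))

lemma mulN_zero (f : NSymA A) : mulN f 0 = 0 := by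
  funext I; simp [mulN]

lemma mulN_add (f g h : NSymA A) : mulN f (g + h) = mulN f g + mulN f h := by
  funext I; simp [mulN, mul_add, Finset.sum_add_distrib]

lemma mulN_smul (c : ℚ) (f g : NSymA A) : mulN f (c • g) = c • mulN f g := by
  funext I
  simp only [mulN, Pi.smul_apply, smul_eq_mul, Finset.mul_sum]
  apply Finset.sum_congr rfl
  intros; ring

lemma zero_mulN (f : NSymA A) : mulN 0 f = 0 := by
  funext I; simp [mulN]

lemma add_mulN (f g h : NSymA A) : mulN (f + g) h = mulN f h + mulN g h := by
  funext I; simp [mulN, add_mul, Finset.sum_add_distrib]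

lemma smul_mulN (c : ℚ) (f g : NSymA A) : mulN (c • f) g = c • mulN f g := by
  funext I
  simp only [mulN, Pi.smul_apply, smul_eq_mul, Finset.mul_sum]
  apply Finset.sum_congr rfl
  intros; ring

lemma mulN_list {α : Type*} (f : NSymA A) (l : List α) (g : α → NSymA A) :
    mulN f (l.map g).sum = (l.map (fun a => mulN f (g a))).sum := by
  induction l with
  | nil => simp [mulN_zero]
  | cons a l ih => simp [mulN_add, ih]

lemma list_mulN {α : Type*} (f : NSymA A) (l : List α) (g : α → NSymA A) :
    mulN (l.map g).sum f = (l.map (fun a => mulN (g a) f)).sum := by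
  induction l with
  | nil => simp [zero_mulN]
  | cons a l ih => simp [add_mulN, ih]

lemma mulN_Hd (M K : Sentence A) : mulN (Hd M) (Hd K) = Hd (M ++ K) := by
  classical
  funext I
  simp only [mulN, Hd]
  by_cases h : I = M ++ K
  · subst h
    rw [Finset.sum_eq_single M.length]
    · simp
    · intro j hj hne
      have : (M ++ K).take j ≠ M := by
        intro h
        have := congrArg List.length h
        simp at this hj
        omega
      simp [this]
    · intro h; simp at h
  · rw [if_neg h]
    apply Finset.sum_eq_zero
    intro j _
    by_cases h1 : I.take j = M
    · by_cases h2 : I.drop j = K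
      · exact absurd (by rw [← h1, ← h2, List.take_append_drop]) h
      · simp [h2]
    · simp [h1]

lemma refs1_mem (w : List A) (Q : Sentence A) :
    Q ∈ refs1 w ↔ IsSentence Q ∧ Q.flatten = w := by
  induction w generalizing Q with
  | nil =>
    simp only [refs1, List.mem_singleton]
    constructor
    · rintro rfl; simp [IsSentence]
    · rintro ⟨h1, h2⟩
      cases Q with
      | nil => rfl
      | cons q Q =>
        simp at h2
        exact absurd h2.1 (h1 q (by simp))
  | cons a w ih =>
    simp only [refs1, List.mem_flatMap]
    constructor
    · rintro ⟨Q0, h0, h1⟩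
      obtain ⟨h2, h3⟩ := (ih Q0).1 h0
      cases Q0 with
      | nil => simp at h1; subst h1; simp [IsSentence] at h3 ⊢; simp [h3]
      | cons q Q' =>
        simp [IsSentence] at h1 h3 h2
        rcases h1 with h1 | h1 <;> subst h1 <;> simp [IsSentence, h3] <;> tauto
    · rintro ⟨h1, h2⟩
      cases Q with
      | nil => simp at h2
      | cons q Q =>
        cases q with
        | nil => exact absurd rfl (h1 [] (by simp))
        | cons b q =>
          simp at h2
          obtain ⟨rfl, h2⟩ := h2
          cases q with
          | nil =>
            refine ⟨Q, (ih Q).2 ⟨fun x hx => h1 x (by simp [hx]), by simpa using h2⟩, by simp⟩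
          | cons c q =>
            refine ⟨(c :: q) :: Q, (ih _).2 ⟨?_, by simpa using h2⟩, by simp⟩
            intro x hx
            simp at hx
            rcases hx with rfl | hx
            · simp
            · exact h1 x (by simp [hx])

lemma refs1_nodup (w : List A) : (refs1 w).Nodup := by
  induction w with
  | nil => simp [refs1]
  | cons a w ih =>
    rw [refs1, List.nodup_flatMap]
    constructor
    · intro Q hQ
      have := (refs1_mem w Q).1 hQ
      cases Q with
      | nil => simp
      | cons q Q =>
        have hq := this.1 q (by simp)
        simp [hq.symm]
    · refine (List.Nodup.pairwise_of_forall_ne ih ?_)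
      intro Q hQ Q' hQ' hne
      have h1 := (refs1_mem w Q).1 hQ
      have h2 := (refs1_mem w Q').1 hQ'
      rw [Function.onFun, List.disjoint_left]
      intro X hX hX'
      cases Q with
      | nil =>
        cases Q' with
        | nil => exact hne rfl
        | cons q' Q' =>
          have := h2.1 q' (by simp)
          simp at hX hX'
          subst hX
          simp at hX'
          exact this hX'.1
      | cons q Q =>
        have h3 := h1.1 q (by simp)
        cases Q' with
        | nil =>
          simp at hX hX'
          subst hX'
          simp at hX
          exact h3 hX.1
        | cons q' Q' =>
          have h4 := h2.1 q' (by simp)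
          simp at hX hX'
          rcases hX with rfl | rfl <;> rcases hX' with h | h <;> simp at h <;> grind

lemma append_split {Q1 Q1' Q Q' : Sentence A} (h1 : IsSentence Q1) (h1' : IsSentence Q1')
    (hf : Q1.flatten = Q1'.flatten) (h : Q1 ++ Q = Q1' ++ Q') : Q1 = Q1' ∧ Q = Q' := by
  induction Q1 generalizing Q1' with
  | nil =>
    cases Q1' with
    | nil => simpa using h
    | cons q Q1' => simp at hf; exact absurd hf.1 (h1' q (by simp))
  | cons a Q1 ih =>
    cases Q1' with
    | nil => simp at hf; exact absurd hf.1 (h1 a (by simp))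
    | cons q Q1' =>
      simp at h
      obtain ⟨rfl, h⟩ := h
      simp at hf
      have := ih (fun x hx => h1 x (by simp [hx])) (fun x hx => h1' x (by simp [hx])) hf h
      simp [this]

lemma refs_nodup (S : Sentence A) : (refs S).Nodup := by
  induction S with
  | nil => simp [refs]
  | cons s S ih =>
    rw [refs, List.nodup_flatMap]
    constructor
    · intro Q _
      exact ih.map (List.append_right_injective Q)
    · refine (List.Nodup.pairwise_of_forall_ne (refs1_nodup s) ?_)
      intro Q hQ Q' hQ' hne
      have h1 := (refs1_mem s Q).1 hQ
      have h2 := (refs1_mem s Q').1 hQ'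
      rw [Function.onFun, List.disjoint_left]
      intro X hX hX'
      simp only [List.mem_map] at hX hX'
      obtain ⟨Y, _, rfl⟩ := hX
      obtain ⟨Y', _, h⟩ := hX'
      exact hne (append_split h1.1 h2.1 (h1.2.trans h2.2.symm) h.symm).1

lemma refs_mem (S : Sentence A) (hS : IsSentence S) (Q : Sentence A) :
    Q ∈ refs S ↔ IsSentence Q ∧ Refines Q S := by
  induction S generalizing Q with
  | nil =>
    simp only [refs, List.mem_singleton]
    constructor
    · rintro rfl
      exact ⟨by simp [IsSentence], [], by simp⟩
    · rintro ⟨_, P, _, h1, h2⟩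
      simp at h2
      subst h2
      simpa using h1.symm
  | cons s S ih =>
    have ih' := ih (fun x hx => hS x (by simp [hx]))
    simp only [refs, List.mem_flatMap, List.mem_map]
    constructor
    · rintro ⟨Q1, h1, Q2, h2, rfl⟩
      obtain ⟨h3, P, h4, h5, h6⟩ := (ih' Q2).1 h2
      obtain ⟨h7, h8⟩ := (refs1_mem s Q1).1 h1
      refine ⟨?_, Q1 :: P, ?_, by simp [h5], by simp [h6, h8]⟩
      · intro x hx
        rw [List.mem_append] at hx
        exact hx.elim (h7 x) (h3 x)
      · intro p hp
        rw [List.mem_cons] at hp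
        rcases hp with rfl | hp
        · rintro rfl
          exact hS s (by simp) (by simpa using h8.symm)
        · exact h4 p hp
    · rintro ⟨h1, P, h2, h3, h4⟩
      cases P with
      | nil => simp at h4
      | cons p P =>
        simp only [List.map_cons, List.cons.injEq, List.flatten_cons] at h3 h4
        subst h3
        refine ⟨p, (refs1_mem _ _).2 ⟨fun x hx => h1 x (by simp [hx]), h4.1⟩, P.flatten,
          (ih' _).2 ⟨fun x hx => h1 x (List.mem_append_right _ hx), P, fun q hq => h2 q (by simp [hq]), rfl, h4.2⟩, rfl⟩

/-- The Bernstein operator on lists. -/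
def bernL (v : List A) (l : List (ℚ × Sentence A)) : List (ℚ × Sentence A) :=
  (ix l).flatMap (fun y => (refs y.2.2).map
    (fun Q => (y.1 * (-1) ^ Q.length, (v ++ Q.reverse.flatten) :: y.2.1)))

lemma rep_flatMap {α : Type*} (l : List α) (f : α → List (ℚ × Sentence A)) :
    rep (l.flatMap f) = (l.map (fun a => rep (f a))).sum := by
  induction l with
  | nil => simp [rep]
  | cons a l ih => simp only [rep] at ih ⊢; simp [ih]

lemma Bern_rep (v : List A) (hv : v ≠ []) (l : List (ℚ × Sentence A))
    (hl : ∀ x ∈ l, IsSentence x.2) : Bern v (rep l) = rep (bernL v l) := by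
  classical
  unfold Bern
  have h0 : ∀ Q : Sentence A, (-1 : ℚ) ^ Q.length • mulN (Hw (v ++ Q.reverse.flatten))
      (∑ᶠ S ∈ {S : Sentence A | Refines Q S}, rperp (MQ S) (rep l)) =
      ((ix l).map (fun y => if Refines Q y.2.2 then
        (y.1 * (-1) ^ Q.length) • Hd ((v ++ Q.reverse.flatten) :: y.2.1) else 0)).sum := by
    intro Q
    rw [sumS_rep l hl, mulN_list, List.smul_sum, List.map_map]
    congr 1
    apply List.map_congr_left
    intro y _
    have hne : (v ++ Q.reverse.flatten).isEmpty = false := by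
      simp [hv]
    simp only [Function.comp]
    split_ifs with h
    · rw [mulN_smul, Hw, hne]
      simp only [Bool.false_eq_true, if_false]
      rw [mulN_Hd, smul_smul, mul_comm]
      rfl
    · rw [mulN_zero, smul_zero]
  simp only [h0]
  rw [finsum_mem_list', bernL, rep_flatMap]
  · congr 1
    apply List.map_congr_left
    intro y hy
    rw [rep, List.map_map, ← List.sum_toFinset _ (refs_nodup _)]
    rw [← finsum_mem_coe_finset]
    have hm := refs_mem y.2.2 (ix_sent l y hy).2
    rw [finsum_mem_def, finsum_mem_def]
    congr 1
    funext Q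
    simp only [Set.indicator, Set.mem_ofPred_eq, List.coe_toFinset, hm, Function.comp]
    by_cases a : IsSentence Q <;> by_cases b : Refines Q y.2.2 <;> simp [a, b]
  · intro y hy
    refine (refs y.2.2).toFinset.finite_toSet.subset ?_
    rintro Q ⟨h1, h2⟩
    rw [List.coe_toFinset]
    refine (refs_mem y.2.2 (ix_sent l y hy).2 Q).2 ⟨h1, ?_⟩
    by_contra hc
    exact h2 (if_neg hc)

/-- `𝔖_J` as a list. -/
def immL (J : Sentence A) : List (ℚ × Sentence A) := J.foldr bernL [(1, [])]

lemma immL_sent (J : Sentence A) (hJ : IsSentence J) : ∀ x ∈ immL J, IsSentence x.2 := by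
  cases J with
  | nil => simp [immL, IsSentence]
  | cons v J =>
    intro x hx
    simp only [immL, List.foldr_cons, bernL, List.mem_flatMap, List.mem_map] at hx
    obtain ⟨y, hy, Q, _, rfl⟩ := hx
    intro w hw
    simp only [List.mem_cons] at hw
    rcases hw with rfl | hw
    · simp [hJ v (by simp)]
    · exact (ix_sent _ y hy).1 w hw

lemma ImmS_rep (J : Sentence A) (hJ : IsSentence J) : ImmS J = rep (immL J) := by
  induction J with
  | nil => simp [ImmS, immL, rep]
  | cons v J ih =>
    have hJ' : IsSentence J := fun x hx => hJ x (by simp [hx])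
    have : ImmS (v :: J) = Bern v (ImmS J) := rfl
    rw [this, ih hJ', Bern_rep v (hJ v (by simp)) _ (immL_sent J hJ')]
    rfl

lemma R_list {α : Type*} (u w : List A) (l : List α) (ψ : α → Sentence A → ℚ) (c : α → ℚ)
    (K : Sentence A) :
    R u w (fun L => (l.map (fun a => c a * ψ a L)).sum) K =
      (l.map (fun a => c a * R u w (ψ a) K)).sum := by
  induction l with
  | nil => simp [R, ssum]
  | cons a l ih =>
    simp only [List.map_cons, List.sum_cons]
    rw [← ih]
    simp only [R, ssum]
    rw [← List.sum_map_mul_left, ← List.sum_map_add]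
    congr 1
    apply List.map_congr_left
    intro ps _
    split_ifs <;> simp

theorem imm_pair (J : Sentence A) (hJ : IsSentence J) (I K : Sentence A) :
    ((immL J).map (fun x => x.1 * cntU I (x.2 ++ K))).sum = skewc J I K := by
  induction J generalizing I K with
  | nil => simp [immL, skewc]
  | cons v J ih =>
    have hJ' : IsSentence J := fun x hx => hJ x (by simp [hx])
    have hv := hJ v (by simp)
    have hne : ∀ Q : Sentence A, v ++ Q.reverse.flatten ≠ [] := by
      intro Q; simp [hv]
    have h0 : immL (v :: J) = bernL v (immL J) := rfl
    rw [h0, bernL, ix, sum_flatMap', sum_flatMap']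
    simp only [List.map_map, Function.comp_def, List.cons_append]
    cases I with
    | nil =>
      simp [cntU, skewc, hv]
    | cons w I =>
      have : skewc (v :: J) (w :: I) K = R v w (skewc J I) K := rfl
      rw [this]
      have h2 : skewc J I = fun L => ((immL J).map (fun x => x.1 * cntU I (x.2 ++ L))).sum := by
        funext L; exact (ih hJ' I L).symm
      rw [h2, R_list v w (immL J) (fun x L => cntU I (x.2 ++ L)) (fun x => x.1)]
      congr 1
      apply List.map_congr_left
      intro x _
      rw [← key, ssum, ← List.sum_map_mul_left]
      congr 1
      apply List.map_congr_left
      intro ps _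
      rw [← List.sum_map_mul_left, refs_flat]
      congr 1
      apply List.map_congr_left
      intro Q _
      rw [cntU_cons_cons _ _ _ (hne Q), (R_inv _ _ _ (cntU_inv I)).flat]
      ring

theorem pair_main (I J K : Sentence A) (hJ : IsSentence J) (hK : IsSentence K)
    (hd : ∀ L : Sentence A, IsSentence L → dualImm I (L, List.range' 1 L.length) = cntU I L) :
    pairNQ (mulN (ImmS J) (Hd K)) (dualImm I) = skewc J I K := by
  have h1 : mulN (ImmS J) (Hd K) = rep ((immL J).map (fun x => (x.1, x.2 ++ K))) := by
    rw [ImmS_rep J hJ, rep, list_mulN, rep, List.map_map]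
    congr 1
    apply List.map_congr_left
    intro x _
    rw [smul_mulN, mulN_Hd]
    rfl
  have h2 : ∀ x ∈ (immL J).map (fun x => (x.1, x.2 ++ K)), IsSentence x.2 := by
    intro x hx
    simp only [List.mem_map] at hx
    obtain ⟨y, hy, rfl⟩ := hx
    intro w hw
    rw [List.mem_append] at hw
    exact hw.elim (immL_sent J hJ y hy w) (hK w)
  rw [h1, pair_rep _ h2, ← imm_pair J hJ, List.map_map]
  congr 1
  apply List.map_congr_left
  intro x hx
  simp only [Function.comp]
  rw [hd _ (h2 (x.1, x.2 ++ K) (List.mem_map.2 ⟨x, hx, rfl⟩))]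

end ColoredImm

namespace ColoredImm
variable {A : Type*}

lemma splits_mem (K : Sentence A) (ps : Sentence A × Sentence A) :
    ps ∈ splitsOf K ↔ ps.1.length = K.length ∧ ps.2.length = K.length ∧
      ∀ i, K.getD i [] = ps.1.getD i [] ++ ps.2.getD i [] := by
  induction K generalizing ps with
  | nil =>
    obtain ⟨p, s⟩ := ps
    simp only [splitsOf, List.mem_singleton, Prod.mk.injEq, List.length_nil,
      List.length_eq_zero_iff]
    constructor
    · rintro ⟨rfl, rfl⟩; simp
    · rintro ⟨h1, h2, _⟩; exact ⟨h1, h2⟩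
  | cons w K ih =>
    simp only [splitsOf, List.mem_flatten, List.mem_map]
    constructor
    · rintro ⟨l, ⟨p, hp, rfl⟩, h2⟩
      simp only [List.mem_map] at h2
      obtain ⟨t, _, rfl⟩ := h2
      obtain ⟨h1, h2, h3⟩ := (ih p).1 hp
      refine ⟨by simp [h1], by simp [h2], ?_⟩
      intro i
      cases i with
      | zero => simp
      | succ i => simpa using h3 i
    · rintro ⟨h1, h2, h3⟩
      obtain ⟨p, s⟩ := ps
      cases p with
      | nil => simp at h1
      | cons a p =>
        cases s with
        | nil => simp at h2
        | cons b s =>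
          refine ⟨_, ⟨(p, s), (ih (p, s)).2 ⟨by simpa using h1, by simpa using h2, ?_⟩, rfl⟩, ?_⟩
          · intro i; simpa using h3 (i + 1)
          · have h4 := h3 0
            simp only [List.getD_cons_zero] at h4
            subst h4
            rw [List.mem_map]
            refine ⟨a.length, ?_, ?_⟩
            · simp
            · simp

lemma splits_nodup (K : Sentence A) : (splitsOf K).Nodup := by
  induction K with
  | nil => simp [splitsOf]
  | cons w K ih =>
    rw [splitsOf, ← List.flatMap_def, List.nodup_flatMap]
    constructor
    · intro p _
      refine List.Nodup.map_on ?_ List.nodup_range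
      intro t ht t' ht' h
      simp only [Prod.mk.injEq, List.cons.injEq, and_true] at h
      have := congrArg List.length h.1
      simp at this ht ht'
      omega
    · refine List.Nodup.pairwise_of_forall_ne ih ?_
      intro p _ p' _ hne
      rw [Function.onFun, List.disjoint_left]
      intro X hX hX'
      simp only [List.mem_map] at hX hX'
      obtain ⟨t, _, rfl⟩ := hX
      obtain ⟨t', _, h⟩ := hX'
      simp only [Prod.mk.injEq, List.cons.injEq] at h
      exact hne (Prod.ext h.1.2.symm h.2.2.symm)

lemma ncard_list {α β : Type*} (l : List α) (T : α → Set β) (c : α → ℚ)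
    (hT : ∀ a ∈ l, (T a).Finite ∧ ((T a).ncard : ℚ) = c a)
    (hd : l.Pairwise (fun a b => Disjoint (T a) (T b))) :
    {b | ∃ a ∈ l, b ∈ T a}.Finite ∧ (({b | ∃ a ∈ l, b ∈ T a}.ncard : ℕ) : ℚ) = (l.map c).sum := by
  induction l with
  | nil => simp
  | cons a l ih =>
    obtain ⟨h1, h2⟩ := ih (fun b hb => hT b (by simp [hb])) (List.pairwise_cons.1 hd).2
    obtain ⟨h3, h4⟩ := hT a (by simp)
    have he : {b | ∃ a' ∈ a :: l, b ∈ T a'} = T a ∪ {b | ∃ a ∈ l, b ∈ T a} := by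
      ext b; simp
    have hdis : Disjoint (T a) {b | ∃ a ∈ l, b ∈ T a} := by
      rw [Set.disjoint_left]
      rintro b hb ⟨a', ha', hb'⟩
      exact Set.disjoint_left.1 ((List.pairwise_cons.1 hd).1 a' ha') hb hb'
    rw [he]
    refine ⟨h3.union h1, ?_⟩
    rw [Set.ncard_union_eq hdis h3 h1]
    push_cast
    rw [h4, h2]
    simp

lemma combine (u z : List A) (ψ : Sentence A → ℚ) (K : Sentence A) (C : Sentence A → Set Filling)
    (W : Sentence A → Set (List ℕ))
    (hC : ∀ p, (C p).Finite ∧ ((C p).ncard : ℚ) = ψ p)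
    (hC' : ∀ p p' f, p.length = p'.length → f ∈ C p → f ∈ C p' → p = p')
    (hW : ∀ s, u ++ s.flatten = z → ∃ r, W s = {r})
    (hW0 : ∀ s, u ++ s.flatten ≠ z → W s = ∅)
    (hW' : ∀ s s' r, s.length = s'.length → r ∈ W s → r ∈ W s' → s = s')
    (X : Set Filling)
    (hX : X = {f | ∃ ps ∈ splitsOf K, f ∈ {f | ∃ r f', f = r :: f' ∧ r ∈ W ps.2 ∧ f' ∈ C ps.1}}) :
    X.Finite ∧ (X.ncard : ℚ) = R u z ψ K := by
  classical
  rw [hX, R, ssum]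
  apply ncard_list
  · intro ps _
    by_cases h : u ++ ps.2.flatten = z
    · rw [if_pos h]
      obtain ⟨r, hr⟩ := hW ps.2 h
      have : {f | ∃ r f', f = r :: f' ∧ r ∈ W ps.2 ∧ f' ∈ C ps.1} = (fun f' => r :: f') '' C ps.1 := by
        ext f
        simp only [hr, Set.mem_ofPred_eq, Set.mem_image, Set.mem_singleton_iff]
        constructor
        · rintro ⟨r', f', rfl, rfl, h⟩; exact ⟨f', h, rfl⟩
        · rintro ⟨f', h, rfl⟩; exact ⟨r, f', rfl, rfl, h⟩
      rw [this]
      refine ⟨(hC _).1.image _, ?_⟩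
      rw [Set.ncard_image_of_injective _ (fun a b h => by simpa using h)]
      exact (hC _).2
    · rw [if_neg h]
      have : {f | ∃ r f', f = r :: f' ∧ r ∈ W ps.2 ∧ f' ∈ C ps.1} = (∅ : Set Filling) := by
        ext f
        simp [hW0 _ h]
      rw [this]
      simp
  · refine List.Nodup.pairwise_of_forall_ne (splits_nodup K) ?_
    intro ps h ps' h' hne
    rw [Set.disjoint_left]
    rintro f ⟨r, f', rfl, h1, h2⟩ ⟨r', f'', he, h3, h4⟩
    simp only [List.cons.injEq] at he
    obtain ⟨rfl, rfl⟩ := he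
    have a := splits_len K ps h
    have b := splits_len K ps' h'
    exact hne (Prod.ext (hC' _ _ _ (a.1.trans b.1.symm) h2 h4)
      (hW' _ _ _ (a.2.trans b.2.symm) h1 h3))

/-- A row filling of `y` with entries `> n` and type `s` (offset by `n`). -/
def Row (n : ℕ) (y : List A) (s : Sentence A) (r : List ℕ) : Prop :=
  r.length = y.length ∧ r.IsChain (· ≤ ·) ∧ (∀ x ∈ r, n < x) ∧
    ∀ v, n < v → rowWith y r v = s.getD (v - n - 1) []

lemma rowWith_eq_nil (w : List A) (r : List ℕ) (h : r.length = w.length) (v : ℕ) :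
    rowWith w r v = [] ↔ v ∉ r := by
  induction w generalizing r with
  | nil => cases r <;> simp_all [rowWith]
  | cons a w ih =>
    cases r with
    | nil => simp at h
    | cons x r =>
      have := ih r (by simpa using h)
      unfold rowWith at this ⊢
      by_cases hx : x = v
      · simp [hx]
      · simp only [List.zip_cons_cons, List.filter_cons, beq_iff_eq, hx, if_false, this,
          List.mem_cons, not_or, ne_eq]
        simp [Ne.symm hx]

lemma rowWith_append (w w' : List A) (r r' : List ℕ) (h : w.length = r.length) (v : ℕ) :
    rowWith (w ++ w') (r ++ r') v = rowWith w r v ++ rowWith w' r' v := by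
  simp [rowWith, List.zip_append h]

lemma rowWith_replicate (w : List A) (m : ℕ) :
    rowWith w (List.replicate w.length m) m = w := by
  induction w with
  | nil => simp [rowWith]
  | cons a w ih =>
    unfold rowWith at ih ⊢
    simp [List.replicate_succ, ih]

lemma sorted_split (r : List ℕ) (n : ℕ) (h : r.Pairwise (· ≤ ·)) (h2 : ∀ x ∈ r, n < x) :
    ∃ k r', r = List.replicate k (n + 1) ++ r' ∧ r'.Pairwise (· ≤ ·) ∧ ∀ x ∈ r', n + 1 < x := by
  induction r with
  | nil => exact ⟨0, [], by simp⟩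
  | cons x r ih =>
    rw [List.pairwise_cons] at h
    by_cases hx : x = n + 1
    · obtain ⟨k, r', h3, h4⟩ := ih h.2 (fun y hy => h2 y (by simp [hy]))
      exact ⟨k + 1, r', by simp [List.replicate_succ, hx, h3], h4⟩
    · have := h2 x (by simp)
      refine ⟨0, x :: r, by simp, List.pairwise_cons.2 h, ?_⟩
      intro y hy
      simp at hy
      rcases hy with rfl | hy
      · omega
      · have := h.1 y hy; omega

lemma row_cons (n : ℕ) (y a : List A) (s : Sentence A) (r : List ℕ) :
    Row n y (a :: s) r ↔ ∃ y' r', y = a ++ y' ∧ r = List.replicate a.length (n + 1) ++ r' ∧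
      Row (n + 1) y' s r' := by
  constructor
  · rintro ⟨h1, h2, h3, h4⟩
    obtain ⟨k, r', rfl, h5, h6⟩ := sorted_split r n (List.isChain_iff_pairwise.1 h2) h3
    simp only [List.length_append, List.length_replicate] at h1
    obtain ⟨y1, y2, rfl, hk⟩ : ∃ y1 y2, y = y1 ++ y2 ∧ y1.length = k :=
      ⟨y.take k, y.drop k, by simp, by simp; omega⟩
    subst hk
    have hl : r'.length = y2.length := by simpa using h1
    have h7 : y1 = a := by
      have := h4 (n + 1) (by omega)
      rw [rowWith_append _ _ _ _ (by simp), rowWith_replicate,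
        (rowWith_eq_nil y2 r' hl (n + 1)).2 (fun h => lt_irrefl _ (h6 _ h))] at this
      simpa using this
    subst h7
    refine ⟨y2, r', rfl, rfl, hl, List.isChain_iff_pairwise.2 h5, h6, ?_⟩
    intro v hv
    have := h4 v (by omega)
    rw [rowWith_append _ _ _ _ (by simp),
      (rowWith_eq_nil y1 _ (by simp) v).2 (by simp; omega)] at this
    obtain ⟨j, rfl⟩ : ∃ j, v = n + 2 + j := ⟨v - (n + 2), by omega⟩
    have e1 : n + 2 + j - n - 1 = j + 1 := by omega
    have e2 : n + 2 + j - (n + 1) - 1 = j := by omega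
    rw [e1] at this
    rw [e2]
    simpa using this
  · rintro ⟨y', r', rfl, rfl, h1, h2, h3, h4⟩
    refine ⟨by simp [h1], ?_, ?_, ?_⟩
    · rw [List.isChain_iff_pairwise] at h2 ⊢
      rw [List.pairwise_append]
      refine ⟨List.pairwise_replicate.2 (Or.inr le_rfl), h2, ?_⟩
      intro x hx z hz
      have := List.eq_of_mem_replicate hx
      have := h3 z hz
      omega
    · intro x hx
      rw [List.mem_append] at hx
      rcases hx with hx | hx
      · have := List.eq_of_mem_replicate hx; omega
      · have := h3 x hx; omega
    · intro v hv
      rw [rowWith_append _ _ _ _ (by simp)]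
      by_cases hv1 : v = n + 1
      · subst hv1
        rw [rowWith_replicate,
          (rowWith_eq_nil y' r' h1 (n + 1)).2 (fun h => lt_irrefl _ (h3 _ h))]
        simp
      · rw [(rowWith_eq_nil a _ (by simp) v).2 (by simp; omega), h4 v (by omega)]
        obtain ⟨j, rfl⟩ : ∃ j, v = n + 2 + j := ⟨v - (n + 2), by omega⟩
        have e1 : n + 2 + j - n - 1 = j + 1 := by omega
        have e2 : n + 2 + j - (n + 1) - 1 = j := by omega
        rw [e1, e2]
        simp

lemma row_nil (n : ℕ) (y : List A) (r : List ℕ) : Row n y [] r ↔ y = [] ∧ r = [] := by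
  constructor
  · rintro ⟨h1, h2, h3, h4⟩
    have : r = [] := by
      rw [List.eq_nil_iff_forall_not_mem]
      intro x hx
      exact (rowWith_eq_nil y r h1 x).1 (by simpa using h4 x (h3 x hx)) hx
    subst this
    exact ⟨by simpa using h1.symm, rfl⟩
  · rintro ⟨rfl, rfl⟩
    simp [Row, rowWith]

lemma row_pos (n : ℕ) (s : Sentence A) : ∃ r, {r | Row n s.flatten s r} = {r} := by
  induction s generalizing n with
  | nil => exact ⟨[], by ext r; simp [row_nil]⟩
  | cons a s ih =>
    obtain ⟨r, hr⟩ := ih (n + 1)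
    have hr' : ∀ r', Row (n + 1) s.flatten s r' ↔ r' = r := fun r' => Set.ext_iff.1 hr r'
    refine ⟨List.replicate a.length (n + 1) ++ r, ?_⟩
    ext r0
    simp only [Set.mem_ofPred_eq, row_cons, Set.mem_singleton_iff]
    constructor
    · rintro ⟨y', r', h, rfl, h2⟩
      simp only [List.flatten_cons, List.append_cancel_left_eq] at h
      subst h
      rw [(hr' r').1 h2]
    · rintro rfl
      exact ⟨s.flatten, r, by simp, rfl, (hr' r).2 rfl⟩

lemma row_flatten (n : ℕ) (y : List A) (s : Sentence A) (r : List ℕ) (h : Row n y s r) :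
    s.flatten = y := by
  induction s generalizing n y r with
  | nil => simp [((row_nil n y r).1 h).1]
  | cons a s ih =>
    obtain ⟨y', r', rfl, rfl, h'⟩ := (row_cons _ _ _ _ _).1 h
    simp [ih _ _ _ h']

lemma getD_inj (s s' : Sentence A) (n : ℕ) (hl : s.length = s'.length) (g : ℕ → List A)
    (h : ∀ v, n < v → g v = s.getD (v - n - 1) []) (h' : ∀ v, n < v → g v = s'.getD (v - n - 1) []) :
    s = s' := by
  apply List.ext_getElem hl
  intro i h1 h2
  have := (h (n + 1 + i) (by omega)).symm.trans (h' (n + 1 + i) (by omega))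
  have e : n + 1 + i - n - 1 = i := by omega
  rw [e, List.getD_eq_getElem _ _ h1, List.getD_eq_getElem _ _ h2] at this
  exact this

lemma row_inj (n : ℕ) (y : List A) (s s' : Sentence A) (r : List ℕ) (hl : s.length = s'.length)
    (h : Row n y s r) (h' : Row n y s' r) : s = s' :=
  getD_inj s s' n hl _ h.2.2.2 h'.2.2.2

/-- Offset immaculate tableaux. -/
def CT (n : ℕ) (I K : Sentence A) (f : Filling) : Prop :=
  IsCIT I f ∧ (∀ x ∈ f.flatten, n < x) ∧ ∀ v, n < v → typeWord I f v = K.getD (v - n - 1) []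

lemma typeWord_cons (w : List A) (I : Sentence A) (r : List ℕ) (f : Filling) (v : ℕ) :
    typeWord (w :: I) (r :: f) v = typeWord I f v ++ rowWith w r v := by
  simp [typeWord]

lemma typeWord_eq_nil (I : Sentence A) (f : Filling) (h : f.map List.length = I.map List.length)
    (v : ℕ) : typeWord I f v = [] ↔ v ∉ f.flatten := by
  induction I generalizing f with
  | nil => cases f <;> simp_all [typeWord]
  | cons w I ih =>
    cases f with
    | nil => simp at h
    | cons r f =>
      simp only [List.map_cons, List.cons.injEq] at h
      rw [typeWord_cons, List.append_eq_nil_iff, ih f h.2, rowWith_eq_nil w r h.1]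
      simp only [List.flatten_cons, List.mem_append]
      tauto

lemma CT_inj (n : ℕ) (I K K' : Sentence A) (f : Filling) (hl : K.length = K'.length)
    (h : CT n I K f) (h' : CT n I K' f) : K = K' :=
  getD_inj K K' n hl _ h.2.2 h'.2.2

lemma CT_shift (n : ℕ) (I K : Sentence A) (f : Filling) :
    CT n I ([] :: K) f ↔ CT (n + 1) I K f := by
  constructor
  · rintro ⟨h1, h2, h3⟩
    refine ⟨h1, ?_, ?_⟩
    · intro x hx
      have a := h2 x hx
      rcases Nat.lt_or_ge (n + 1) x with h | h
      · exact h
      · have : x = n + 1 := by omega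
        subst this
        exact absurd hx ((typeWord_eq_nil I f h1.1 (n + 1)).1 (by simpa using h3 (n + 1) a))
    · intro v hv
      rw [h3 v (by omega)]
      obtain ⟨j, rfl⟩ : ∃ j, v = n + 2 + j := ⟨v - (n + 2), by omega⟩
      have e1 : n + 2 + j - n - 1 = j + 1 := by omega
      have e2 : n + 2 + j - (n + 1) - 1 = j := by omega
      rw [e1, e2]; simp
  · rintro ⟨h1, h2, h3⟩
    refine ⟨h1, fun x hx => by have := h2 x hx; omega, ?_⟩
    intro v hv
    by_cases hv1 : v = n + 1
    · subst hv1
      rw [(typeWord_eq_nil I f h1.1 (n + 1)).2 (fun h => lt_irrefl _ (h2 _ h))]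
      simp
    · rw [h3 v (by omega)]
      obtain ⟨j, rfl⟩ : ∃ j, v = n + 2 + j := ⟨v - (n + 2), by omega⟩
      have e1 : n + 2 + j - n - 1 = j + 1 := by omega
      have e2 : n + 2 + j - (n + 1) - 1 = j := by omega
      rw [e1, e2]; simp

/-- Reconstruct a split of `K` from two functions. -/
lemma split_of (K : Sentence A) (n : ℕ) (g h : ℕ → List A)
    (hh : ∀ v, n < v → g v ++ h v = K.getD (v - n - 1) []) :
    ∃ ps ∈ splitsOf K, (∀ v, n < v → g v = ps.1.getD (v - n - 1) []) ∧
      ∀ v, n < v → h v = ps.2.getD (v - n - 1) [] := by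
  have hz : ∀ v, n < v → K.length ≤ v - n - 1 → g v = [] ∧ h v = [] := by
    intro v hv hk
    have := hh v hv
    rw [List.getD_eq_default _ _ hk] at this
    simpa using this
  have hg : ∀ g : ℕ → List A, (∀ v, n < v → K.length ≤ v - n - 1 → g v = []) → ∀ v, n < v →
      g v = ((List.range K.length).map (fun i => g (n + 1 + i))).getD (v - n - 1) [] := by
    intro g hg v hv
    rcases Nat.lt_or_ge (v - n - 1) K.length with h | h
    · rw [List.getD_eq_getElem _ _ (by simpa using h)]
      simp only [List.getElem_map, List.getElem_range]
      congr 1; omega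
    · rw [List.getD_eq_default _ _ (by simpa using h)]
      exact hg v hv h
  have h1 := hg g (fun v hv hk => (hz v hv hk).1)
  have h2 := hg h (fun v hv hk => (hz v hv hk).2)
  refine ⟨((List.range K.length).map (fun i => g (n + 1 + i)),
    (List.range K.length).map (fun i => h (n + 1 + i))), ?_, h1, h2⟩
  rw [splits_mem]
  refine ⟨by simp, by simp, ?_⟩
  intro i
  have e : n + 1 + i - n - 1 = i := by omega
  have h1' := h1 (n + 1 + i) (by omega)
  have h2' := h2 (n + 1 + i) (by omega)
  have h3' := hh (n + 1 + i) (by omega)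
  rw [e] at h1' h2' h3'
  simp only
  rw [← h1', ← h2', h3']

lemma CT_step (n : ℕ) (w : List A) (I : Sentence A) (hI : IsSentence I) (hw : w ≠ [])
    (x : List A) (hx : x ≠ []) (K : Sentence A) (f : Filling) :
    CT n (w :: I) (x :: K) f ↔ ∃ ps ∈ splitsOf K, ∃ r f', f = r :: f' ∧
      Row n w (x :: ps.2) r ∧ CT (n + 1) I ps.1 f' := by
  constructor
  · rintro ⟨⟨h1, h2, h3, h4⟩, h5, h6⟩
    cases f with
    | nil => simp at h1
    | cons r f =>
      simp only [List.map_cons, List.cons.injEq] at h1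
      cases r with
      | nil => simp at h1; exact absurd (List.length_eq_zero_iff.1 h1.1.symm) hw
      | cons a r =>
        have han : n < a := h5 a (by simp)
        have h3' : ((a :: f.filterMap List.head?)).Pairwise (· < ·) := by
          have : ((a :: f.filterMap List.head?)).IsChain (· < ·) := h3
          exact List.isChain_iff_pairwise.1 this
        rw [List.pairwise_cons] at h3'
        have hf : ∀ z ∈ f.flatten, n + 1 < z := by
          intro z hz
          rw [List.mem_flatten] at hz
          obtain ⟨row, hrow, hz⟩ := hz
          cases row with
          | nil => simp at hz
          | cons b row =>
            have hb : a < b := h3'.1 b (by rw [List.mem_filterMap]; exact ⟨_, hrow, rfl⟩)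
            have hc := List.isChain_iff_pairwise.1 (h2 _ (List.mem_cons_of_mem _ hrow))
            rw [List.pairwise_cons] at hc
            simp at hz
            rcases hz with rfl | hz
            · omega
            · have := hc.1 z hz; omega
        have hcit : IsCIT I f := ⟨h1.2, fun row hr => h2 row (List.mem_cons_of_mem _ hr),
          List.isChain_iff_pairwise.2 h3'.2, fun z hz => by have := hf z hz; omega⟩
        obtain ⟨ps, hps, hp, hs⟩ := split_of K (n + 1) (typeWord I f) (rowWith w (a :: r)) (by
          intro v hv
          have := h6 v (by omega)
          rw [typeWord_cons] at this
          rw [this]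
          obtain ⟨j, rfl⟩ : ∃ j, v = n + 2 + j := ⟨v - (n + 2), by omega⟩
          have e1 : n + 2 + j - n - 1 = j + 1 := by omega
          have e2 : n + 2 + j - (n + 1) - 1 = j := by omega
          rw [e1, e2]; simp)
        refine ⟨ps, hps, a :: r, f, rfl, ⟨h1.1, h2 _ (by simp), ?_, ?_⟩, hcit, hf, hp⟩
        · intro z hz
          exact h5 z (by rw [List.flatten_cons]; exact List.mem_append_left _ hz)
        · intro v hv
          by_cases hv1 : v = n + 1
          · subst hv1
            have := h6 (n + 1) hv
            rw [typeWord_cons, (typeWord_eq_nil I f h1.2 (n + 1)).2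
              (fun h => lt_irrefl _ (hf _ h))] at this
            simpa using this
          · rw [hs v (by omega)]
            obtain ⟨j, rfl⟩ : ∃ j, v = n + 2 + j := ⟨v - (n + 2), by omega⟩
            have e1 : n + 2 + j - n - 1 = j + 1 := by omega
            have e2 : n + 2 + j - (n + 1) - 1 = j := by omega
            rw [e1, e2]; simp
  · rintro ⟨ps, hps, r, f, rfl, hr, ⟨h1, h2, h3, h4⟩, h5, h6⟩
    obtain ⟨_, _, hsp⟩ := (splits_mem K ps).1 hps
    obtain ⟨g1, g2, g3, g4⟩ := hr
    have hall : ∀ z ∈ (r :: f).flatten, n < z := by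
      intro z hz
      rw [List.flatten_cons, List.mem_append] at hz
      rcases hz with hz | hz
      · exact g3 z hz
      · have := h5 z hz; omega
    refine ⟨⟨by simp [g1, h1], ?_, ?_, fun z hz => by have := hall z hz; omega⟩, hall, ?_⟩
    · intro row hrow
      simp at hrow
      rcases hrow with rfl | hrow
      · exact g2
      · exact h2 row hrow
    · have hm : n + 1 ∈ r := by
        by_contra hc
        have := (rowWith_eq_nil w r g1 (n + 1)).2 hc
        rw [g4 (n + 1) (by omega)] at this
        simp at this
        exact hx this
      cases r with
      | nil => simp at hm
      | cons a r =>
        have hle : a ≤ n + 1 := by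
          have hc := List.isChain_iff_pairwise.1 g2
          rw [List.pairwise_cons] at hc
          simp only [List.mem_cons] at hm
          rcases hm with hm | hm
          · omega
          · exact hc.1 _ hm
        have : ((a :: f.filterMap List.head?)).IsChain (· < ·) := by
          rw [List.isChain_iff_pairwise, List.pairwise_cons]
          refine ⟨?_, List.isChain_iff_pairwise.1 h3⟩
          intro b hb
          rw [List.mem_filterMap] at hb
          obtain ⟨row, hrow, hb⟩ := hb
          have := h5 b (List.mem_flatten.2 ⟨row, hrow, List.mem_of_mem_head? hb⟩)
          omega
        exact this
    · intro v hv
      rw [typeWord_cons, g4 v hv]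
      by_cases hv1 : v = n + 1
      · subst hv1
        rw [(typeWord_eq_nil I f h1 (n + 1)).2 (fun h => lt_irrefl _ (h5 _ h))]
        simp
      · rw [h6 v (by omega)]
        obtain ⟨j, rfl⟩ : ∃ j, v = n + 2 + j := ⟨v - (n + 2), by omega⟩
        have e1 : n + 2 + j - n - 1 = j + 1 := by omega
        have e2 : n + 2 + j - (n + 1) - 1 = j := by omega
        rw [e1, e2]
        simpa using (hsp j).symm

theorem CT_count (I : Sentence A) (hI : IsSentence I) (n : ℕ) (K : Sentence A) :
    {f | CT n I K f}.Finite ∧ ({f | CT n I K f}.ncard : ℚ) = cntU I K := by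
  classical
  induction I generalizing n K with
  | nil =>
    have hf : ∀ f, CT n ([] : Sentence A) K f ↔ f = [] ∧ ∀ k ∈ K, k = [] := by
      intro f
      constructor
      · rintro ⟨⟨h1, _⟩, _, h2⟩
        refine ⟨by simpa using h1, ?_⟩
        intro k hk
        obtain ⟨i, hi, rfl⟩ := List.mem_iff_getElem.1 hk
        have := h2 (n + 1 + i) (by omega)
        have e : n + 1 + i - n - 1 = i := by omega
        rw [e, List.getD_eq_getElem _ _ hi] at this
        rw [← this]; simp [typeWord]
      · rintro ⟨rfl, h⟩
        refine ⟨⟨rfl, by simp, List.IsChain.nil, by simp⟩, by simp, ?_⟩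
        intro v _
        rcases Nat.lt_or_ge (v - n - 1) K.length with hl | hl
        · rw [List.getD_eq_getElem _ _ hl, h _ (List.getElem_mem hl)]; simp [typeWord]
        · rw [List.getD_eq_default _ _ hl]; simp [typeWord]
    by_cases h : ∀ k ∈ K, k = []
    · have : {f | CT n ([] : Sentence A) K f} = {[]} := by
        ext f; simp only [Set.mem_ofPred_eq, hf, Set.mem_singleton_iff]; tauto
      rw [this]
      simp only [cntU, if_pos h]
      simp
    · have : {f | CT n ([] : Sentence A) K f} = ∅ := by
        ext f; simp only [Set.mem_ofPred_eq, hf, Set.mem_empty_iff_false]; tauto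
      rw [this]
      simp only [cntU, if_neg h]
      simp
  | cons w I ih =>
    have hI' : IsSentence I := fun x hx => hI x (by simp [hx])
    have hw := hI w (by simp)
    induction K generalizing n with
    | nil =>
      have : {f | CT n (w :: I) [] f} = ∅ := by
        ext f
        simp only [Set.mem_ofPred_eq, Set.mem_empty_iff_false, iff_false]
        rintro ⟨⟨h1, _⟩, h2, h3⟩
        cases f with
        | nil => simp at h1
        | cons r f =>
          cases r with
          | nil => simp at h1; exact hw (List.length_eq_zero_iff.1 h1.1.symm)
          | cons a r =>
            have ha : a ∈ ((a :: r) :: f).flatten := by simp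
            exact (typeWord_eq_nil _ _ h1 a).1 (by simpa using h3 a (h2 a ha)) ha
      rw [this]
      simp [cntU]
    | cons x K ihK =>
      by_cases hx : x = []
      · subst hx
        simp only [CT_shift, cntU_cons_nil]
        exact ihK (n + 1)
      · rw [cntU_cons_cons _ _ _ hx]
        apply combine x w (cntU I) K (fun p => {f | CT (n + 1) I p f})
          (fun s => {r | Row n w (x :: s) r})
        · intro p; exact ih hI' (n + 1) p
        · intro p p' f hl h h'
          exact CT_inj _ _ _ _ _ hl h h'
        · intro s hs
          subst hs
          simpa using row_pos n (x :: s)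
        · intro s hs
          ext r
          simp only [Set.mem_ofPred_eq, Set.mem_empty_iff_false, iff_false]
          intro h
          exact hs (by simpa using row_flatten _ _ _ _ h)
        · intro s s' r hl h h'
          have := row_inj n w (x :: s) (x :: s') r (by simp [hl]) h h'
          simpa using this
        · ext f
          simp only [Set.mem_ofPred_eq]
          exact CT_step n w I hI' hw x hx K f

/-- Offset skew immaculate tableaux. -/
def GT (J I K : Sentence A) (f : Filling) : Prop := IsSkewCIT I J f ∧ SkewHasType I J f K

lemma skewTypeWord_cons (w v : List A) (I J : Sentence A) (r : List ℕ) (f : Filling) (x : ℕ) :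
    skewTypeWord (w :: I) (v :: J) (r :: f) x =
      skewTypeWord I J f x ++ rowWith (w.drop v.length) r x := by
  simp [skewTypeWord, List.range_succ_eq_map, Function.comp_def, List.map_reverse]

lemma skewTypeWord_nil (I : Sentence A) (f : Filling) (h : f.length = I.length) (x : ℕ) :
    skewTypeWord I [] f x = typeWord I f x := by
  induction I generalizing f with
  | nil => simp [skewTypeWord, typeWord]
  | cons w I ih =>
    cases f with
    | nil => simp at h
    | cons r f =>
      rw [typeWord_cons, ← ih f (by simpa using h)]
      simp [skewTypeWord, List.range_succ_eq_map, Function.comp_def, List.map_reverse]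

lemma filterMap_range (I : Sentence A) (f : Filling) (h : f.length = I.length) :
    (List.range I.length).filterMap (fun i => (f.getD i []).head?) = f.filterMap List.head? := by
  have : f = (List.range I.length).map (fun i => f.getD i []) := by
    apply List.ext_getElem
    · simp [h]
    · intro i h1 h2
      simp [h1]
  conv_rhs => rw [this]
  rw [List.filterMap_map]
  rfl

lemma map_range (I : Sentence A) :
    (List.range I.length).map (fun i => (I.getD i []).length) = I.map List.length := by
  apply List.ext_getElem
  · simp
  · intro i h1 h2
    have : i < I.length := by simpa using h2
    simp [this]

lemma skew_nil (I : Sentence A) (f : Filling) : IsSkewCIT I [] f ↔ IsCIT I f := by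
  unfold IsSkewCIT IsCIT
  have h0 : (List.range I.length).map (fun i => (I.getD i []).length -
      (([] : Sentence A).getD i []).length) = I.map List.length := by
    rw [← map_range]; simp
  rw [h0]
  apply and_congr_right
  intro h
  have hl : f.length = I.length := by simpa using congrArg List.length h
  have := filterMap_range I f hl
  simp only [List.getD_nil, List.length_nil, if_true]
  rw [this]

lemma skew_cons (w v : List A) (hv : v ≠ []) (I J : Sentence A) (r : List ℕ) (f : Filling) :
    IsSkewCIT (w :: I) (v :: J) (r :: f) ↔ (r.length = (w.drop v.length).length ∧
      r.IsChain (· ≤ ·) ∧ (∀ x ∈ r, 1 ≤ x)) ∧ IsSkewCIT I J f := by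
  have hv' : v.length ≠ 0 := by simpa using hv
  have hc : ∀ l : List ℕ, l.IsChain (· ≤ ·) ↔ l.Chain' (· ≤ ·) := fun _ => Iff.rfl
  unfold IsSkewCIT
  simp only [hc, forall_eq, List.length_cons, List.range_succ_eq_map, List.map_cons, List.map_map,
    List.filterMap_cons, List.getD_cons_zero, hv', if_false, List.filterMap_map,
    Function.comp_def, List.getD_cons_succ, List.cons.injEq, List.mem_cons, forall_eq_or_imp,
    List.flatten_cons, List.mem_append, or_imp, forall_and, List.length_drop]
  tauto

lemma GT_step (w v : List A) (hv : v ≠ []) (I J K : Sentence A) (f : Filling) :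
    GT (v :: J) (w :: I) K f ↔ ∃ ps ∈ splitsOf K, ∃ r f', f = r :: f' ∧
      Row 0 (w.drop v.length) ps.2 r ∧ GT J I ps.1 f' := by
  constructor
  · rintro ⟨h1, h2⟩
    cases f with
    | nil =>
      have := congrArg List.length h1.1
      simp at this
    | cons r f =>
      rw [skew_cons _ _ hv] at h1
      obtain ⟨⟨g1, g2, g3⟩, h1⟩ := h1
      obtain ⟨ps, hps, hp, hs⟩ := split_of K 0 (skewTypeWord I J f)
        (rowWith (w.drop v.length) r) (by
          intro x hx
          rw [← skewTypeWord_cons]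
          exact h2 x hx)
      exact ⟨ps, hps, r, f, rfl, ⟨g1, g2, g3, hs⟩, h1, hp⟩
  · rintro ⟨ps, hps, r, f, rfl, ⟨g1, g2, g3, g4⟩, h1, h2⟩
    obtain ⟨_, _, hsp⟩ := (splits_mem K ps).1 hps
    refine ⟨(skew_cons _ _ hv _ _ _ _).2 ⟨⟨g1, g2, g3⟩, h1⟩, ?_⟩
    intro x hx
    rw [skewTypeWord_cons, g4 x hx, h2 x hx, hsp]
    rfl

theorem GT_count (I J : Sentence A) (hI : IsSentence I) (hJ : IsSentence J)
    (hL : LeftContained J I) (K : Sentence A) :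
    {f | GT J I K f}.Finite ∧ ({f | GT J I K f}.ncard : ℚ) = skewc J I K := by
  induction J generalizing I K with
  | nil =>
    have : {f | GT [] I K f} = {f | CT 0 I K f} := by
      ext f
      simp only [Set.mem_ofPred_eq, GT, CT, skew_nil]
      constructor
      · rintro ⟨h1, h2⟩
        have hl : f.length = I.length := by simpa using congrArg List.length h1.1
        refine ⟨h1, h1.2.2.2, ?_⟩
        intro v hv
        rw [← skewTypeWord_nil I f hl]
        exact h2 v hv
      · rintro ⟨h1, _, h2⟩
        have hl : f.length = I.length := by simpa using congrArg List.length h1.1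
        refine ⟨h1, ?_⟩
        intro v hv
        rw [skewTypeWord_nil I f hl]
        exact h2 v hv
    rw [this]
    exact CT_count I hI 0 K
  | cons v J ih =>
    have hJ' : IsSentence J := fun x hx => hJ x (by simp [hx])
    have hv := hJ v (by simp)
    cases I with
    | nil => exact absurd hL.1 (by simp)
    | cons w I =>
      have hI' : IsSentence I := fun x hx => hI x (by simp [hx])
      have hpre : v <+: w := by simpa using hL.2 0 (by simp)
      have hL' : LeftContained J I := by
        refine ⟨by simpa using hL.1, ?_⟩
        intro i hi
        simpa using hL.2 (i + 1) (by simpa using hi)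
      obtain ⟨y, rfl⟩ := hpre
      apply combine v (v ++ y) (skewc J I) K (fun p => {f | GT J I p f})
          (fun s => {r | Row 0 ((v ++ y).drop v.length) s r})
      · intro p; exact ih I hI' hJ' hL' p
      · intro p p' f hl h h'
        exact getD_inj p p' 0 hl _ h.2 h'.2
      · intro s hs
        simp only [List.append_cancel_left_eq] at hs
        subst hs
        simpa using row_pos 0 s
      · intro s hs
        ext r
        simp only [Set.mem_ofPred_eq, Set.mem_empty_iff_false, iff_false]
        intro h
        exact hs (by simpa using row_flatten _ _ _ _ h)
      · intro s s' r hl h h'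
        exact row_inj _ _ _ _ r hl h h'
      · ext f
        simp only [Set.mem_ofPred_eq]
        exact GT_step (v ++ y) v hv I J K f

lemma le_maxEntry (f : Filling) (x : ℕ) (hx : x ∈ f.flatten) : x ≤ maxEntry f := by
  unfold maxEntry
  generalize f.flatten = l at hx ⊢
  induction l with
  | nil => simp at hx
  | cons a l ih =>
    simp only [List.mem_cons] at hx
    simp only [List.foldr_cons]
    rcases hx with rfl | hx
    · exact le_max_left _ _
    · exact le_max_of_le_right (ih hx)

lemma mono_iff (I : Sentence A) (f : Filling) (hf : IsCIT I f) (L : Sentence A)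
    (hL : IsSentence L) : monoOf I f = (L, List.range' 1 L.length) ↔
      ∀ v, 0 < v → typeWord I f v = L.getD (v - 0 - 1) [] := by
  have hmem : ∀ v, v ∈ ((List.range (maxEntry f)).map (· + 1)).filter
      (fun v => !(typeWord I f v).isEmpty) ↔ 0 < v ∧ typeWord I f v ≠ [] := by
    intro v
    simp only [List.mem_filter, List.mem_map, List.mem_range, Bool.not_eq_true',
      List.isEmpty_eq_false_iff]
    constructor
    · rintro ⟨⟨a, _, rfl⟩, h⟩; exact ⟨by omega, h⟩
    · rintro ⟨h1, h2⟩
      refine ⟨⟨v - 1, ?_, by omega⟩, h2⟩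
      have : v ∈ f.flatten := by
        by_contra hc
        exact h2 ((typeWord_eq_nil I f hf.1 v).2 hc)
      have := le_maxEntry f v this
      omega
  simp only [monoOf, Prod.mk.injEq]
  constructor
  · rintro ⟨h1, h2⟩ v hv
    rw [h2] at h1 hmem
    rcases Nat.lt_or_ge (v - 0 - 1) L.length with hl | hl
    · conv_rhs => rw [← h1]
      rw [List.getD_eq_getElem _ _ (by simpa using hl)]
      simp only [List.getElem_map, List.getElem_range']
      congr 1; omega
    · rw [List.getD_eq_default _ _ hl]
      by_contra hc
      have := (hmem v).2 ⟨hv, hc⟩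
      simp at this
      omega
  · intro h
    have h2 : ((List.range (maxEntry f)).map (· + 1)).filter
      (fun v => !(typeWord I f v).isEmpty) = List.range' 1 L.length := by
      apply List.Pairwise.eq_of_mem_iff (r := (· < ·))
      · apply List.Pairwise.filter
        rw [List.pairwise_map]
        exact List.pairwise_lt_range.imp (fun h => by omega)
      · exact List.pairwise_lt_range'
      · intro v
        rw [hmem]
        simp only [List.mem_range'_1]
        constructor
        · rintro ⟨h1, h2⟩
          rw [h v h1] at h2
          refine ⟨h1, ?_⟩
          by_contra hc
          exact h2 (List.getD_eq_default _ _ (by omega))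
        · rintro ⟨h1, h2⟩
          refine ⟨h1, ?_⟩
          rw [h v h1, List.getD_eq_getElem _ _ (by omega)]
          exact hL _ (List.getElem_mem _)
    rw [h2]
    refine ⟨?_, rfl⟩
    apply List.ext_getElem
    · simp
    · intro i h1 h3
      simp only [List.getElem_map, List.getElem_range']
      rw [h _ (by omega), List.getD_eq_getElem _ _ (by omega)]
      congr 1; omega

lemma dualImm_eq (I : Sentence A) (hI : IsSentence I) (L : Sentence A) (hL : IsSentence L) :
    dualImm I (L, List.range' 1 L.length) = cntU I L := by
  rw [← (CT_count I hI 0 L).2, dualImm]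
  congr 2
  ext f
  simp only [Set.mem_ofPred_eq, CT]
  constructor
  · rintro ⟨h1, h2⟩
    exact ⟨h1, h1.2.2.2, (mono_iff I f h1 L hL).1 h2⟩
  · rintro ⟨h1, _, h2⟩
    exact ⟨h1, (mono_iff I f h1 L hL).2 h2⟩

end ColoredImm

namespace ColoredImm

/-- Let `I, J` be sentences with `J ⊆_L I` and let `K` be a sentence with
`|K| = |I| - |J|`.  Then `⟨𝔖_J · H_K, 𝔖*_I⟩` equals the number of skew colored immaculate
tableaux of shape `I/J` and type `K`. -/
theorem statement18 {A : Type*} (I J K : Sentence A)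
    (hI : IsSentence I) (hJ : IsSentence J) (hK : IsSentence K)
    (hL : LeftContained J I) (hsz : size K = size I - size J) :
    pairNQ (mulN (ImmS J) (Hd K)) (dualImm I) =
      (Set.ncard {f : Filling | IsSkewCIT I J f ∧ SkewHasType I J f K} : ℚ) := by
  rw [pair_main I J K hJ hK (fun L hL => dualImm_eq I hI L hL)]
  exact (GT_count I J hI hJ hL K).2.symm

end ColoredImm
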